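/- For every n ≥ 2, initial segments of the balanced order minimise the gap among down-sets in X_n of given size: if A ⊆ X_n is a finite down-set and I is the initial segment of the balanced order on X_n with |I| = |A|, then gap(I) ≤ gap(A). -/

import Mathlib

/-! For a down-set `A ⊆ X_n` the projection `π_i(A)` is in bijection with the points of `A` having
`i`-th coordinate `0`. Hence `gap A = (n - 1) * |A| - wt A`, where `wt A` counts the pairs of a
point of `A` and a positive coordinate of it (`gap_add_wt`), and the claim is that among down-sets
of a given size the initial segment maximises `wt`.

This is proved by induction on the dimension, together with the same statement for a second
functional: the size of `fill A`, the set of positive points all of whose replacements of one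
coordinate by `0` lie in `A` (`bounded_of_good`). The second functional is needed because the slice
of `A` at height `0` in a direction `i` consists of the part with a zero coordinate, which is a set
of the same kind one dimension lower, and a positive part, which lies in the `fill` of the former.

*Initial segments.* The balanced order exhausts one after the other a sequence of boxes whose sides
differ by at most one, each box arising from the previous one by adding a single layer, and this
layer is filled in the balanced order of one dimension less (`seg_add`; `toN_initSeg` identifies
`seg` with the initial segments of the statement). So the increments of `m ↦ wt (seg d m)` and
`m ↦ |fill (seg d m)|` fall into blocks which are prefixes of the corresponding sequence one
dimension lower, raised by one per point in the case of `wt` (`blocks_wt`, `blocks_fill`). By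
induction both functionals are superadditive and, within a box, the final window has the largest
increment among the windows of its length (`Blocks.windowed`). The consequence used below is that a
window starting at or after the start of a block has at least the increment of a window of the same
length at the start of that block (`Blocks.start_le`).

*Induction step.* Let `A` lie in a balanced box, and let `i` be a direction of its longest side
`M + 1`. By the induction hypothesis all slices in direction `i` may be replaced by initial
segments, and the positive part by a set nested with their `fill`s; moreover points can be moved
from the top slice to the positive part until the top slice is empty or its `fill` is no larger
than the positive part, without decreasing either functional (`exists_shift`, `exists_compress`).
If the top slice is empty, the set lies in a smaller balanced box. Otherwise one of its top layers
is so small compared to the rest that it can be removed: the bounds for the layer, of lower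
dimension, and for the rest, of smaller size, combine by `Blocks.start_le` (`bounded_build`,
`bounded_of_peel`).
-/

namespace ProjWA

variable {ι : Type*}

/-- `A ⊆ ℤ^ι` is a weak antichain if it contains no `x, y` with `x i < y i` for every `i`. -/
def IsWeakAntichain [Fintype ι] (A : Finset (ι → ℤ)) : Prop :=
  ∀ x ∈ A, ∀ y ∈ A, ¬ ∀ i, x i < y i

/-- The projection deleting the coordinate `i`. -/
def projFun [DecidableEq ι] (i : ι) (x : ι → ℤ) : {j : ι // j ≠ i} → ℤ :=
  fun j => x j.1

/-- The image of a finite set under the projection deleting coordinate `i`. -/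
def proj [Fintype ι] [DecidableEq ι] (i : ι) (A : Finset (ι → ℤ)) :
    Finset ({j : ι // j ≠ i} → ℤ) :=
  A.image (projFun i)

/-- `gap A = Σ_i |π_i(A)| - |A|`. -/
def gap [Fintype ι] [DecidableEq ι] (A : Finset (ι → ℤ)) : ℤ :=
  (∑ i : ι, ((proj i A).card : ℤ)) - A.card

/-- `X_n`: the set of points of `ℤ_{≥0}^ι` having at least one coordinate equal to zero. -/
def XSet (ι : Type*) : Set (ι → ℤ) :=
  {x | (∀ i, 0 ≤ x i) ∧ ∃ i, x i = 0}

/-- A down-set in `ℤ_{≥0}^ι`. -/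
def IsDownSet (A : Finset (ι → ℤ)) : Prop :=
  ∀ x y : ι → ℤ, (∀ i, 0 ≤ x i) → (∀ i, x i ≤ y i) → y ∈ A → x ∈ A

/-- The `i`-th bottom layer `B_i(A)`. -/
def bottomLayer [Fintype ι] [DecidableEq ι] (i : ι) (A : Finset (ι → ℤ)) : Finset (ι → ℤ) :=
  A.filter fun x => ∀ y ∈ A, (∀ j, j ≠ i → y j = x j) → x i ≤ y i

/-- The `i`-compression `C_i(A)`: each `x ∈ B_i(A)` is replaced by the point obtained
by setting its `i`-th coordinate to `0`. -/
def compress [Fintype ι] [DecidableEq ι] (i : ι) (A : Finset (ι → ℤ)) : Finset (ι → ℤ) :=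
  (A \ bottomLayer i A) ∪ (bottomLayer i A).image fun x => Function.update x i 0

/-- `layersRest A k = A \ (A_1 ∪ ⋯ ∪ A_k)` where `A_i` are the layers of `A`. -/
def layersRest {n : ℕ} (A : Finset (Fin n → ℤ)) : ℕ → Finset (Fin n → ℤ)
  | 0 => A
  | k + 1 =>
      layersRest A k \ (if h : k < n then bottomLayer ⟨k, h⟩ (layersRest A k) else ∅)

/-- The layers `A_1, …, A_n` of `A`, defined by `A_i = B_i(A \ (A_1 ∪ ⋯ ∪ A_{i-1}))`. -/
def layer {n : ℕ} (A : Finset (Fin n → ℤ)) (i : Fin n) : Finset (Fin n → ℤ) :=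
  bottomLayer i (layersRest A i.1)

/-- `compressUpTo A k = C_k(C_{k-1}(⋯(C_1(A))⋯))`. -/
def compressUpTo {n : ℕ} (A : Finset (Fin n → ℤ)) : ℕ → Finset (Fin n → ℤ)
  | 0 => A
  | k + 1 =>
      if h : k < n then compress ⟨k, h⟩ (compressUpTo A k) else compressUpTo A k

/-- The complete `i`-compression `𝒞_i(A)`: every line in direction `i` is replaced
by an initial segment of the same size. -/
def ccompress [Fintype ι] [DecidableEq ι] (i : ι) (A : Finset (ι → ℤ)) : Finset (ι → ℤ) :=
  A.biUnion fun x =>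
    (Finset.range ((A.filter fun y => ∀ j, j ≠ i → y j = x j).card)).image fun a : ℕ =>
      Function.update x i (a : ℤ)

/-- The set `T = {i : x i ≠ y i}` of coordinates where `x` and `y` differ. -/
def diffSet [Fintype ι] (x y : ι → ℤ) : Finset ι :=
  Finset.univ.filter fun i => x i ≠ y i

/-- The maximum value of `x` on a finite set of coordinates (`⊥` if the set is empty). -/
def maxOn (s : Finset ι) (x : ι → ℤ) : WithBot ℤ :=
  (s.image x).max

/-- The largest coordinate in `s` at which `x` attains its maximum over `s`. -/
def argmaxOn [LinearOrder ι] (s : Finset ι) (x : ι → ℤ) : WithBot ι :=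
  (s.filter fun i => (x i : WithBot ℤ) = maxOn s x).max

/-- The balanced order: with `T = {i : x i ≠ y i}`, `x < y` iff the maximum of `x` on `T` is
smaller than that of `y` on `T`, or they are equal and the largest index where `x` attains
this maximum on `T` is smaller than the corresponding index for `y`. -/
def balancedLT [Fintype ι] [LinearOrder ι] (x y : ι → ℤ) : Prop :=
  x ≠ y ∧
    (maxOn (diffSet x y) x < maxOn (diffSet x y) y ∨
      (maxOn (diffSet x y) x = maxOn (diffSet x y) y ∧
        argmaxOn (diffSet x y) x < argmaxOn (diffSet x y) y))

/-- `I` is an initial segment of the balanced order on `X_ι`. -/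
def IsInitSeg [Fintype ι] [LinearOrder ι] (I : Finset (ι → ℤ)) : Prop :=
  ↑I ⊆ XSet ι ∧ ∀ x ∈ I, ∀ y ∈ XSet ι, balancedLT y x → y ∈ I

/-- `S(A) = {x ∈ ℤ_{>0}^ι : replacing any one coordinate of x by 0 gives an element of A}`. -/
def SSet [DecidableEq ι] (A : Finset (ι → ℤ)) : Set (ι → ℤ) :=
  {x | (∀ k, 0 < x k) ∧ ∀ k, Function.update x k 0 ∈ A}

/-- Insert the value `a` at position `i`. -/
def insertAt [DecidableEq ι] (i : ι) (a : ℤ) (x : {j : ι // j ≠ i} → ℤ) : ι → ℤ :=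
  fun j => if h : j = i then a else x ⟨j, h⟩

/-- `L^i_a(A)`: the elements of `X_{n-1}` which, after inserting the value `a` at
position `i`, give elements of `A`. -/
def Lset [Fintype ι] [DecidableEq ι] (i : ι) (a : ℤ) (A : Finset (ι → ℤ)) :
    Finset ({j : ι // j ≠ i} → ℤ) :=
  (proj i (A.filter fun x => x i = a)).filter fun x' => ∃ j, x' j = 0

/-- `K^i(A)`: the elements of `ℤ_{>0}^{n-1}` which, after inserting a `0` at position `i`,
give elements of `A`. -/
def Kset [Fintype ι] [DecidableEq ι] (i : ι) (A : Finset (ι → ℤ)) :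
    Finset ({j : ι // j ≠ i} → ℤ) :=
  (proj i (A.filter fun x => x i = 0)).filter fun x' => ∀ j, 0 < x' j

/-- `K` is an initial segment of `ℤ_{>0}^{n-1}` with respect to the order `≺` defined by
`x ≺ y` iff inserting a `0` at position `i` into `x` gives a smaller element of `X_n`
(in the balanced order) than inserting a `0` at position `i` into `y`. -/
def IsKInitSeg [Fintype ι] [LinearOrder ι] (i : ι) (K : Finset ({j : ι // j ≠ i} → ℤ)) :
    Prop :=
  (∀ x ∈ K, ∀ j, 0 < x j) ∧
    ∀ x ∈ K, ∀ y : {j : ι // j ≠ i} → ℤ, (∀ j, 0 < y j) →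
      balancedLT (insertAt i 0 y) (insertAt i 0 x) → y ∈ K

/-- `A_N = {x ∈ ℤ^n : 0 ≤ x_j ≤ N-1 for all j, and x_i = 0 for some i}`. -/
def ANbox (n N : ℕ) : Finset (Fin n → ℤ) :=
  (Fintype.piFinset fun _ : Fin n => (Finset.range N).image fun k : ℕ => (k : ℤ)).filter
    fun x => ∃ i, x i = 0

/-- `g(n,m)`: the minimum of `gap A` over weak antichains `A` of size `m` in `ℤ^n`. -/
noncomputable def gMin (n m : ℕ) : ℝ :=
  sInf {r : ℝ | ∃ A : Finset (Fin n → ℤ), IsWeakAntichain A ∧ A.card = m ∧ (gap A : ℝ) = r}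

namespace Balanced

section
open Finset

/-! ### Sequences with window properties -/

/-- A function `G` is superadditive, and among the windows contained in `[0, P l]` the final one
has the largest increment. -/
structure Windowed (P : ℕ → ℕ) (G : ℕ → ℕ) : Prop where
  super : ∀ a b, G a + G b ≤ G (a + b)
  final : ∀ l s r, s + r ≤ P l → G (s + r) + G (P l - r) ≤ G (P l) + G s

/-- The increments of `G` consist of an initial `0` followed by blocks, the `l`-th block starting
at `B l` and being the first `P l` increments of `G'`. -/
structure Blocks (B P G G' : ℕ → ℕ) : Prop where
  B_zero : B 0 = 1
  B_succ : ∀ l, B (l + 1) = B l + P l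
  P_pos : ∀ l, 0 < P l
  P_mono : Monotone P
  G_zero : G 0 = 0
  G_one : G 1 = 0
  G_add : ∀ l s, s ≤ P l → G (B l + s) = G (B l) + G' s

namespace Blocks

variable {B P G G' : ℕ → ℕ}

lemma B_mono (h : Blocks B P G G') : StrictMono B :=
  strictMono_nat_of_lt_succ fun l => by
    have := h.B_succ l
    have := h.P_pos l
    omega

lemma exists_block (h : Blocks B P G G') {m : ℕ} (hm : 1 ≤ m) :
    ∃ l s, m = B l + s ∧ s < P l := by
  induction m, hm using Nat.le_induction with
  | base => exact ⟨0, 0, by simp [h.B_zero], h.P_pos 0⟩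
  | succ m _ ih =>
    obtain ⟨l, s, rfl, hs⟩ := ih
    rcases Nat.lt_or_ge (s + 1) (P l) with h1 | h1
    · exact ⟨l, s + 1, by omega, h1⟩
    · exact ⟨l + 1, 0, by rw [h.B_succ]; omega, h.P_pos _⟩

lemma exists_block' (h : Blocks B P G G') {m : ℕ} (hm : 2 ≤ m) :
    ∃ l s, m = B l + s ∧ 1 ≤ s ∧ s ≤ P l := by
  obtain ⟨l, s, h1, h2⟩ := h.exists_block (m := m - 1) (by omega)
  exact ⟨l, s + 1, by omega, by omega, by omega⟩

/-- A window of length at most `P l` that starts at or after the start of the `l`-th block has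
at least the increment of the initial window of `G'` of the same length. -/
lemma start_le (h : Blocks B P G G') (hW : Windowed P G') {l x b : ℕ} (hx : B l ≤ x)
    (hb : b ≤ P l) : G x + G' b ≤ G (x + b) := by
  have hB0 : B 0 ≤ B l := h.B_mono.monotone (Nat.zero_le _)
  have := h.B_zero
  obtain ⟨j, a, rfl, ha⟩ := h.exists_block (m := x) (by omega)
  have hlj : l ≤ j := by
    by_contra hlt
    have h1 : B (j + 1) ≤ B l := h.B_mono.monotone (by omega)
    have := h.B_succ j
    omega
  have hP : P l ≤ P j := h.P_mono hlj
  rcases Nat.lt_or_ge (P j) (a + b) with h1 | h1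
  · have e1 : B j + a + b = B (j + 1) + (a + b - P j) := by rw [h.B_succ]; omega
    have hP' : P j ≤ P (j + 1) := h.P_mono (by omega)
    rw [e1, h.G_add (j + 1) _ (by omega), h.B_succ, h.G_add j _ le_rfl, h.G_add j a ha.le]
    have h2 := hW.final j (a + b - P j) (P j - a) (by omega)
    rw [show a + b - P j + (P j - a) = b by omega, show P j - (P j - a) = a by omega] at h2
    omega
  · rw [add_assoc, h.G_add j _ h1, h.G_add j a ha.le]
    have := hW.super a b
    omega

/-- A window of length `r ≤ P k` that ends no later than the `k`-th block has at most the
increment of the last `r` steps of that block. -/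
lemma le_final_aux (h : Blocks B P G G') (hW : Windowed P G') (k : ℕ) :
    ∀ r e, e ≤ B (k + 1) → r ≤ e → r ≤ P k → G e + G' (P k - r) ≤ G (e - r) + G' (P k) := by
  intro r
  induction r using Nat.strong_induction_on with
  | _ r ih =>
    intro e he hre hr
    have hG0 : G' 0 = 0 := by have := hW.super 0 0; simp at this; exact this
    have hmono : ∀ a b, a ≤ b → G' a ≤ G' b := fun a b hab => by
      have := hW.super a (b - a)
      rw [show a + (b - a) = b by omega] at this
      omega
    rcases Nat.lt_or_ge e 2 with h2 | h2
    · have : G e = 0 := by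
        interval_cases e
        · exact h.G_zero
        · exact h.G_one
      have := hmono (P k - r) (P k) (by omega)
      omega
    · obtain ⟨j, b, rfl, hb1, hb⟩ := h.exists_block' h2
      have hjk : j ≤ k := by
        by_contra hlt
        have h1 : B (k + 1) ≤ B j := h.B_mono.monotone (by omega)
        omega
      have hP : P j ≤ P k := h.P_mono hjk
      rcases Nat.lt_or_ge b r with hbr | hbr
      · have h3 := ih (r - b) (by omega) (B j) (by omega) (by omega) (by omega)
        have h4 := hW.super (P k - r) b
        rw [h.G_add j b hb, show B j + b - r = B j - (r - b) by omega]
        rw [show P k - r + b = P k - (r - b) by omega] at h4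
        omega
      · have h3 := hW.final k (b - r) r (by omega)
        rw [show b - r + r = b by omega] at h3
        rw [h.G_add j b hb, show B j + b - r = B j + (b - r) by omega,
          h.G_add j (b - r) (by omega)]
        omega

lemma le_final (h : Blocks B P G G') (hW : Windowed P G') (k : ℕ) :
    ∀ r e, e ≤ B k → r ≤ e → G e + G (B k - r) ≤ G (e - r) + G (B k) := by
  induction k with
  | zero =>
    intro r e he hr
    rw [h.B_zero] at *
    have h0 := h.G_zero
    have h1 := h.G_one
    have : G e = 0 := by interval_cases e <;> assumption
    have : G (1 - r) = 0 := by
      have : r ≤ 1 := by omega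
      interval_cases r <;> simpa
    omega
  | succ k ih =>
    intro r e he hr
    have e1 := h.B_succ k
    have e2 := h.G_add k (P k) le_rfl
    rw [← e1] at e2
    rcases Nat.lt_or_ge (P k) r with h1 | h1
    · have h2 := h.le_final_aux hW k (P k) e he (by omega) le_rfl
      have h3 := ih (r - P k) (e - P k) (by omega) (by omega)
      rw [show e - P k - (r - P k) = e - r by omega,
        show B k - (r - P k) = B (k + 1) - r by omega] at h3
      have hG0 : G' 0 = 0 := by have := hW.super 0 0; simp at this; exact this
      rw [Nat.sub_self, hG0] at h2
      omega
    · have h2 := h.le_final_aux hW k r e he hr h1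
      have h3 := h.G_add k (P k - r) (by omega)
      rw [show B k + (P k - r) = B (k + 1) - r by omega] at h3
      omega

lemma super_add (h : Blocks B P G G') (hW : Windowed P G') :
    ∀ r s, G r + G s ≤ G (r + s) := by
  have hmono1 : ∀ x, G x ≤ G (x + 1) := fun x => by
    rcases Nat.eq_zero_or_pos x with rfl | hx
    · rw [h.G_zero]; exact Nat.zero_le _
    · have := h.start_le hW (l := 0) (x := x) (b := 1) (by rw [h.B_zero]; omega) (h.P_pos 0)
      omega
  have hmono : Monotone G := monotone_nat_of_le_succ hmono1
  intro r
  induction r using Nat.strong_induction_on with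
  | _ r ih =>
    intro s
    rcases Nat.lt_or_ge r 2 with h2 | h2
    · have : G r = 0 := by
        interval_cases r
        · exact h.G_zero
        · exact h.G_one
      have := hmono (show s ≤ r + s by omega)
      omega
    · obtain ⟨l, b, rfl, hb1, hb⟩ := h.exists_block' h2
      have h3 := ih (B l) (by omega) s
      have h4 := h.start_le hW (l := l) (x := B l + s) (by omega) hb
      rw [h.G_add l b hb, show B l + b + s = B l + s + b by omega]
      omega

/-- The window properties pass from `G'` to `G`. -/
theorem windowed (h : Blocks B P G G') (hW : Windowed P G') : Windowed B G where
  super := h.super_add hW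
  final l s r hr := by
    have := h.le_final hW l r (s + r) hr (by omega)
    rw [Nat.add_sub_cancel] at this
    omega

end Blocks

lemma Windowed.comp {P G : ℕ → ℕ} (h : Windowed P G) (f : ℕ → ℕ) :
    Windowed (fun l => P (f l)) G :=
  ⟨h.super, fun l => h.final (f l)⟩

lemma Windowed.add_id {P G : ℕ → ℕ} (h : Windowed P G) : Windowed P (fun s => G s + s) where
  super a b := by have := h.super a b; omega
  final l s r hr := by have := h.final l s r hr; omega

/-- Convex sequences have the window properties. -/
lemma Windowed.of_convex {P G : ℕ → ℕ} (h0 : G 0 = 0)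
    (h : ∀ a b, a ≤ b → G (a + 1) + G b ≤ G a + G (b + 1)) : Windowed P G := by
  have key : ∀ r a b, a ≤ b → G (a + r) + G b ≤ G a + G (b + r) := by
    intro r
    induction r with
    | zero => intro a b _; simp
    | succ r ih =>
      intro a b hab
      have h1 := ih a b hab
      have h2 := h (a + r) (b + r) (by omega)
      rw [← add_assoc, ← add_assoc]
      omega
  refine ⟨fun a b => ?_, fun l s r hr => ?_⟩
  · have := key a 0 b (Nat.zero_le _)
    rw [zero_add, h0, add_comm b a] at this
    omega
  · have := key r s (P l - r) (by omega)
    rw [show P l - r + r = P l by omega] at this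
    omega

/-! ### Weights and fills -/

/-- The number of positive coordinates of `x`. -/
def supp {n : ℕ} (x : Fin n → ℕ) : ℕ := ∑ i, if 0 < x i then 1 else 0

/-- The total number of positive coordinates of the points of `A`. -/
def wt {n : ℕ} (A : Finset (Fin n → ℕ)) : ℕ := ∑ x ∈ A, supp x

/-- The points with a zero coordinate that are bounded by `c`. -/
def box {n : ℕ} (c : Fin n → ℕ) : Finset (Fin n → ℕ) :=
  (Fintype.piFinset fun j => range (c j + 1)).filter fun x => ∃ i, x i = 0

/-- The points with positive coordinates such that replacing any coordinate by `0` gives a point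
of `A`. (In dimension at least two, such points lie in the bounding box of `A`; in dimension one
the definition is a truncation.) -/
def fill {n : ℕ} (A : Finset (Fin n → ℕ)) : Finset (Fin n → ℕ) :=
  (Fintype.piFinset fun j => range (A.sup (fun x => x j) + 1)).filter fun z =>
    (∀ i, 0 < z i) ∧ ∀ i, Function.update z i 0 ∈ A

lemma mem_box {n : ℕ} {c x : Fin n → ℕ} : x ∈ box c ↔ (∀ j, x j ≤ c j) ∧ ∃ i, x i = 0 := by
  simp [box, Fintype.mem_piFinset]

lemma mem_fill {d : ℕ} {A : Finset (Fin (d + 2) → ℕ)} {z : Fin (d + 2) → ℕ} :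
    z ∈ fill A ↔ (∀ i, 0 < z i) ∧ ∀ i, Function.update z i 0 ∈ A := by
  simp only [fill, mem_filter, Fintype.mem_piFinset, mem_range, Nat.lt_succ_iff,
    and_iff_right_iff_imp]
  rintro ⟨-, h⟩ j
  obtain ⟨k, hk⟩ := exists_ne j
  have := le_sup (f := fun x : Fin (d + 2) → ℕ => x j) (h k)
  simpa [Function.update_of_ne hk.symm] using this

lemma fill_mono {d : ℕ} {A A' : Finset (Fin (d + 2) → ℕ)} (h : A ⊆ A') : fill A ⊆ fill A' := by
  intro z
  simp only [mem_fill]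
  exact fun ⟨h1, h2⟩ => ⟨h1, fun i => h (h2 i)⟩

lemma fill_box {d : ℕ} (c : Fin (d + 2) → ℕ) :
    fill (box c) = Fintype.piFinset fun j => Icc 1 (c j) := by
  ext z
  simp only [mem_fill, mem_box, Fintype.mem_piFinset, mem_Icc]
  constructor
  · rintro ⟨h1, h2⟩ j
    obtain ⟨k, hk⟩ := exists_ne j
    have := (h2 k).1 j
    rw [Function.update_of_ne hk.symm] at this
    exact ⟨h1 j, this⟩
  · refine fun h => ⟨fun i => (h i).1, fun i => ⟨fun j => ?_, i, by simp⟩⟩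
    by_cases hj : j = i
    · subst hj; simp
    · rw [Function.update_of_ne hj]; exact (h j).2

lemma card_fill_box {d : ℕ} (c : Fin (d + 2) → ℕ) : (fill (box c)).card = ∏ j, c j := by
  simp [fill_box]

lemma card_box_add {n : ℕ} (c : Fin n → ℕ) : (box c).card + ∏ j, c j = ∏ j, (c j + 1) := by
  have h := card_filter_add_card_filter_not (s := Fintype.piFinset fun j => range (c j + 1))
    (fun x => ∃ i, x i = 0)
  rw [Fintype.card_piFinset] at h
  simp only [card_range] at h
  rw [← h, box]
  congr 1
  have : (Fintype.piFinset fun j => range (c j + 1)).filter (fun x => ¬ ∃ i, x i = 0)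
      = Fintype.piFinset fun j => Icc 1 (c j) := by
    ext x
    simp only [mem_filter, Fintype.mem_piFinset, mem_range, mem_Icc, not_exists]
    constructor
    · rintro ⟨h1, h2⟩ j
      have := h1 j; have := h2 j; omega
    · intro h1
      exact ⟨fun j => by have := h1 j; omega, fun j => by have := h1 j; omega⟩
  rw [this]
  simp

lemma box_isLowerSet {n : ℕ} (c : Fin n → ℕ) : IsLowerSet (box c : Set (Fin n → ℕ)) := by
  intro x y hyx hx
  simp only [mem_coe, mem_box] at *
  obtain ⟨h1, i, hi⟩ := hx
  exact ⟨fun j => (hyx j).trans (h1 j), i, Nat.le_zero.mp (hi ▸ hyx i)⟩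

/-! ### Balanced boxes -/

/-- The `l`-th balanced side vector in dimension `d + 1`: its entries sum to `l`, differ by at most
one, and the larger ones come first. -/
def cap (d l : ℕ) (j : Fin (d + 1)) : ℕ := l / (d + 1) + if (j : ℕ) < l % (d + 1) then 1 else 0

/-- The number of points of the `l`-th balanced box in dimension `d + 1`. -/
def B (d l : ℕ) : ℕ := (box (cap d l)).card

/-- The coordinate in which `cap d (l + 1)` exceeds `cap d l`. -/
def pos (d l : ℕ) : Fin (d + 1) := ⟨l % (d + 1), Nat.mod_lt _ (Nat.succ_pos _)⟩

/-- The index of the balanced box left when coordinate `pos (d + 1) l` is deleted from the box of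
index `l` in dimension `d + 2`. -/
def red (d l : ℕ) : ℕ := l - l / (d + 2)

lemma exists_div_mod (d l : ℕ) : ∃ q p, l = q * (d + 1) + p ∧ p < d + 1 ∧
    l / (d + 1) = q ∧ l % (d + 1) = p :=
  ⟨l / (d + 1), l % (d + 1), (Nat.div_add_mod' _ _).symm, Nat.mod_lt _ (Nat.succ_pos _), rfl, rfl⟩

lemma div_mod_of {d l q p : ℕ} (h : l = q * (d + 1) + p) (hp : p < d + 1) :
    l / (d + 1) = q ∧ l % (d + 1) = p := by
  subst h
  rw [mul_comm]
  exact ⟨by rw [Nat.mul_add_div (Nat.succ_pos _), Nat.div_eq_of_lt hp, add_zero],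
    by rw [Nat.mul_add_mod, Nat.mod_eq_of_lt hp]⟩

lemma cap_pos (d l : ℕ) : cap d l (pos d l) = l / (d + 1) := by
  simp [cap, pos]

lemma cap_succ (d l : ℕ) (j : Fin (d + 1)) :
    cap d (l + 1) j = cap d l j + if j = pos d l then 1 else 0 := by
  obtain ⟨q, p, h, hp, h1, h2⟩ := exists_div_mod d l
  have hj := j.isLt
  simp only [cap, pos, h1, h2, Fin.ext_iff]
  rcases Nat.lt_or_ge (p + 1) (d + 1) with h3 | h3
  · obtain ⟨h4, h5⟩ := div_mod_of (d := d) (l := l + 1) (q := q) (p := p + 1) (by omega) h3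
    rw [h4, h5]
    split_ifs <;> omega
  · have : p = d := by omega
    obtain ⟨h4, h5⟩ := div_mod_of (d := d) (l := l + 1) (q := q + 1) (p := 0)
      (by rw [add_mul]; omega) (by omega)
    rw [h4, h5]
    split_ifs <;> omega

lemma cap_mono {d l l' : ℕ} (h : l ≤ l') (j : Fin (d + 1)) : cap d l j ≤ cap d l' j :=
  monotone_nat_of_le_succ (f := fun l => cap d l j) (fun l => by rw [cap_succ]; omega) h

lemma cap_succAbove (d l : ℕ) (j : Fin (d + 1)) :
    cap (d + 1) l ((pos (d + 1) l).succAbove j) = cap d (red d l) j := by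
  obtain ⟨q, p, h, hp, h1, h2⟩ := exists_div_mod (d + 1) l
  have hj := j.isLt
  have h1' : l / (d + 2) = q := h1
  have hr : red d l = q * (d + 1) + p := by
    rw [red, h1', h]
    have : q * (d + 1 + 1) = q * (d + 1) + q := by ring
    omega
  simp only [cap, h1, h2, hr, Fin.succAbove, pos, Fin.lt_def, Fin.val_castSucc]
  rcases Nat.lt_or_ge p (d + 1) with h3 | h3
  · obtain ⟨h4, h5⟩ := div_mod_of (d := d) (q := q) rfl h3
    rw [h4, h5]
    split_ifs <;> simp_all <;> omega
  · have : p = d + 1 := by omega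
    subst this
    obtain ⟨h4, h5⟩ := div_mod_of (d := d) (l := q * (d + 1) + (d + 1)) (q := q + 1) (p := 0)
      (by ring) (by omega)
    rw [h4, h5]
    split_ifs <;> simp_all

lemma cap_succ_pos (d l : ℕ) : cap d (l + 1) (pos d l) = l / (d + 1) + 1 := by
  rw [cap_succ, cap_pos, if_pos rfl]

lemma cap_succ_succAbove (d l : ℕ) (j : Fin (d + 1)) :
    cap (d + 1) (l + 1) ((pos (d + 1) l).succAbove j) = cap d (red d l) j := by
  rw [cap_succ, cap_succAbove, if_neg (Fin.succAbove_ne _ _), add_zero]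

lemma cap_le {d l M : ℕ} (h : l ≤ (d + 1) * M) (j : Fin (d + 1)) : cap d l j ≤ M := by
  obtain ⟨q, p, h0, hp, h1, h2⟩ := exists_div_mod d l
  simp only [cap, h1, h2]
  rw [mul_comm] at h
  have hq : q ≤ M := by
    by_contra hlt
    have : (M + 1) * (d + 1) ≤ q * (d + 1) := Nat.mul_le_mul_right _ (by omega)
    have : (M + 1) * (d + 1) = M * (d + 1) + (d + 1) := by ring
    omega
  rcases Nat.lt_or_ge q M with h3 | h3
  · split_ifs <;> omega
  · have : q = M := by omega
    subst this
    rw [if_neg (by omega)]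
    omega

lemma le_cap {d l M : ℕ} (h : (d + 1) * M ≤ l) (j : Fin (d + 1)) : M ≤ cap d l j := by
  have : M ≤ l / (d + 1) := (Nat.le_div_iff_mul_le (Nat.succ_pos _)).mpr (by rwa [mul_comm])
  simp only [cap]; omega

lemma sum_cap (d l : ℕ) : ∑ j, cap d l j = l := by
  induction l with
  | zero => simp [cap]
  | succ l ih =>
    simp only [cap_succ, sum_add_distrib, ih]
    simp

lemma cap_le_cap (d l : ℕ) (i j : Fin (d + 1)) : cap d l i ≤ cap d l j + 1 := by
  simp only [cap]; split_ifs <;> omega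

lemma red_mono (d : ℕ) : Monotone (red d) := by
  refine monotone_nat_of_le_succ fun l => ?_
  have h2 : (l + 1) / (d + 2) ≤ l / (d + 2) + 1 :=
    (Nat.div_le_div_right (by omega : l + 1 ≤ l + (d + 2))).trans (by
      rw [Nat.add_div_right _ (by omega)])
  have h3 : l / (d + 2) ≤ l := Nat.div_le_self _ _
  simp only [red]; omega

lemma box_mono {n : ℕ} {c c' : Fin n → ℕ} (h : ∀ j, c j ≤ c' j) : box c ⊆ box c' := by
  intro x
  simp only [mem_box]
  exact fun ⟨h1, h2⟩ => ⟨fun j => (h1 j).trans (h j), h2⟩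

lemma B_mono' (d : ℕ) : Monotone (B d) := fun _ _ h => card_le_card (box_mono (cap_mono h))

lemma B_pos (d l : ℕ) : 0 < B d l :=
  card_pos.mpr ⟨0, mem_box.mpr ⟨fun _ => Nat.zero_le _, 0, rfl⟩⟩

lemma B_zero (d : ℕ) : B d 0 = 1 := by
  rw [B, card_eq_one]
  refine ⟨0, ?_⟩
  ext x
  simp only [mem_box, cap, Nat.zero_div, Nat.zero_mod, mem_singleton]
  constructor
  · rintro ⟨h, -⟩
    ext j
    simpa using h j
  · rintro rfl
    exact ⟨fun j => by simp, 0, rfl⟩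

lemma box_zero (l : ℕ) : box (cap 0 l) = {0} := by
  ext x
  simp only [mem_box, mem_singleton]
  constructor
  · rintro ⟨-, i, hi⟩
    ext j
    have hji : j = i := Fin.ext (by omega)
    rw [hji, hi]; rfl
  · rintro rfl
    exact ⟨fun j => Nat.zero_le _, 0, rfl⟩

/-- Box `l + 1` arises from box `l` by adding one layer, itself a balanced box of one dimension
less. -/
lemma box_succ (d l : ℕ) : box (cap (d + 1) (l + 1)) = box (cap (d + 1) l) ∪
    (box (cap d (red d l))).image ((pos (d + 1) l).insertNth (l / (d + 2) + 1)) := by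
  ext x
  have e1 : cap (d + 1) (l + 1) (pos (d + 1) l) = l / (d + 2) + 1 := cap_succ_pos (d + 1) l
  have e2 : cap (d + 1) l (pos (d + 1) l) = l / (d + 2) := cap_pos (d + 1) l
  simp only [mem_union, mem_image]
  constructor
  · intro hx
    rw [mem_box] at hx
    by_cases hp : x (pos (d + 1) l) = l / (d + 2) + 1
    · right
      refine ⟨(pos (d + 1) l).removeNth x, mem_box.mpr ⟨fun j => ?_, ?_⟩, ?_⟩
      · rw [← cap_succ_succAbove]; exact hx.1 _
      · obtain ⟨i, hi⟩ := hx.2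
        obtain rfl | ⟨j, rfl⟩ := Fin.eq_self_or_eq_succAbove (pos (d + 1) l) i
        · exact absurd (hp.symm.trans hi) (Nat.succ_ne_zero _)
        · exact ⟨j, hi⟩
      · rw [← hp, Fin.insertNth_self_removeNth]
    · left
      refine mem_box.mpr ⟨fun j => ?_, hx.2⟩
      have h1 := hx.1 j
      have h2 := cap_succ (d + 1) l j
      by_cases hj : j = pos (d + 1) l
      · subst hj; omega
      · rw [if_neg hj] at h2; omega
  · rintro (h | ⟨y, hy, rfl⟩)
    · exact box_mono (cap_mono (Nat.le_succ l)) h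
    · rw [mem_box] at hy ⊢
      refine ⟨fun j => ?_, ?_⟩
      · obtain rfl | ⟨j, rfl⟩ := Fin.eq_self_or_eq_succAbove (pos (d + 1) l) j
        · rw [Fin.insertNth_apply_same, e1]
        · rw [Fin.insertNth_apply_succAbove, cap_succ_succAbove]; exact hy.1 _
      · obtain ⟨i, hi⟩ := hy.2
        exact ⟨(pos (d + 1) l).succAbove i, by rw [Fin.insertNth_apply_succAbove, hi]⟩

lemma disjoint_layer (d l : ℕ) (L : Finset (Fin (d + 1) → ℕ)) : Disjoint (box (cap (d + 1) l))
    (L.image ((pos (d + 1) l).insertNth (l / (d + 2) + 1))) := by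
  rw [disjoint_left]
  intro x hx hx'
  obtain ⟨y, -, rfl⟩ := mem_image.mp hx'
  have h := (mem_box.mp hx).1 (pos (d + 1) l)
  have e2 : cap (d + 1) l (pos (d + 1) l) = l / (d + 2) := cap_pos (d + 1) l
  rw [Fin.insertNth_apply_same, e2] at h
  omega

lemma insertNth_inj {n : ℕ} (i : Fin (n + 1)) (a : ℕ) :
    Function.Injective (i.insertNth (α := fun _ => ℕ) a) := by
  intro x y h
  have := congrArg (fun f => i.removeNth f) h
  simpa using this

lemma B_succ (d l : ℕ) : B (d + 1) (l + 1) = B (d + 1) l + B d (red d l) := by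
  rw [B, box_succ, card_union_of_disjoint (disjoint_layer _ _ _),
    card_image_of_injective _ (insertNth_inj _ _)]
  rfl

lemma B_strictMono (d : ℕ) : StrictMono (B (d + 1)) :=
  strictMono_nat_of_lt_succ fun l => by have := B_succ d l; have := B_pos d (red d l); omega

/-! ### Initial segments -/

open Classical in
/-- The initial segment of size `m` of the balanced order on the points of `ℕ^(d+1)` with a zero
coordinate, described recursively: it is a balanced box together with an initial segment, of one
dimension less, of the next layer. -/
noncomputable def seg : (d m : ℕ) → Finset (Fin (d + 1) → ℕ)
  | 0, m => if m = 0 then ∅ else {0}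
  | d + 1, m => if m = 0 then ∅ else
      let l := Nat.findGreatest (fun l => B (d + 1) l ≤ m) m
      box (cap (d + 1) l) ∪
        (seg d (m - B (d + 1) l)).image ((pos (d + 1) l).insertNth (l / (d + 2) + 1))

lemma seg_zero (d : ℕ) : seg d 0 = ∅ := by cases d <;> simp [seg]

lemma seg_add_lt (d l s : ℕ) (hs : s < B d (red d l)) : seg (d + 1) (B (d + 1) l + s) =
    box (cap (d + 1) l) ∪
      (seg d s).image ((pos (d + 1) l).insertNth (l / (d + 2) + 1)) := by
  have h0 := B_pos (d + 1) l
  have hl : Nat.findGreatest (fun k => B (d + 1) k ≤ B (d + 1) l + s) (B (d + 1) l + s) = l := by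
    rw [Nat.findGreatest_eq_iff]
    refine ⟨((B_strictMono d).le_apply).trans (Nat.le_add_right _ _),
      fun _ => Nat.le_add_right _ _, fun k hk _ => ?_⟩
    have h1 : B (d + 1) (l + 1) ≤ B (d + 1) k := B_mono' _ hk
    have := B_succ d l
    omega
  rw [seg, if_neg (by omega)]
  simp only [hl, Nat.add_sub_cancel_left]

lemma seg_box (d l : ℕ) : seg d (B d l) = box (cap d l) := by
  cases d with
  | zero => rw [box_zero, seg, if_neg (B_pos _ _).ne']
  | succ d =>
    have := seg_add_lt d l 0 (B_pos _ _)
    rwa [seg_zero, image_empty, union_empty, add_zero] at this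

lemma seg_add (d l s : ℕ) (hs : s ≤ B d (red d l)) : seg (d + 1) (B (d + 1) l + s) =
    box (cap (d + 1) l) ∪
      (seg d s).image ((pos (d + 1) l).insertNth (l / (d + 2) + 1)) := by
  rcases hs.lt_or_eq with h | rfl
  · exact seg_add_lt d l s h
  · rw [← B_succ, seg_box, seg_box, box_succ]

lemma exists_B_add (d : ℕ) {m : ℕ} (hm : 1 ≤ m) :
    ∃ l s, m = B (d + 1) l + s ∧ s < B d (red d l) := by
  induction m, hm using Nat.le_induction with
  | base => exact ⟨0, 0, by simp [B_zero], B_pos _ _⟩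
  | succ m _ ih =>
    obtain ⟨l, s, rfl, hs⟩ := ih
    rcases Nat.lt_or_ge (s + 1) (B d (red d l)) with h1 | h1
    · exact ⟨l, s + 1, by omega, h1⟩
    · exact ⟨l + 1, 0, by rw [B_succ]; omega, B_pos _ _⟩

lemma seg_subset_succ (d : ℕ) : ∀ m, seg d m ⊆ seg d (m + 1) := by
  induction d with
  | zero => intro m; by_cases h : m = 0 <;> simp [seg, h]
  | succ d ih =>
    intro m
    rcases Nat.eq_zero_or_pos m with rfl | hm
    · rw [seg_zero]; exact empty_subset _
    · obtain ⟨l, s, rfl, hs⟩ := exists_B_add d hm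
      change seg (d + 1) (B (d + 1) l + s) ⊆ seg (d + 1) (B (d + 1) l + (s + 1))
      rw [seg_add d l s hs.le, seg_add d l (s + 1) hs]
      exact union_subset_union_right (image_subset_image (ih s))

lemma seg_mono (d : ℕ) : Monotone (seg d) := monotone_nat_of_le_succ (seg_subset_succ d)

lemma card_seg (d : ℕ) : ∀ l m, m ≤ B d l → (seg d m).card = m := by
  induction d with
  | zero =>
    intro l m hm
    rw [B, box_zero, card_singleton] at hm
    interval_cases m <;> simp [seg]
  | succ d ih =>
    intro l' m _
    rcases Nat.eq_zero_or_pos m with rfl | hm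
    · simp [seg_zero]
    · obtain ⟨l, s, rfl, hs⟩ := exists_B_add d hm
      rw [seg_add d l s hs.le, card_union_of_disjoint (disjoint_layer _ _ _),
        card_image_of_injective _ (insertNth_inj _ _), ih _ s hs.le]
      rfl

lemma card_seg' (d m : ℕ) : (seg (d + 1) m).card = m :=
  card_seg (d + 1) m m (B_strictMono d).le_apply

lemma seg_hasZero (d : ℕ) : ∀ m, ∀ x ∈ seg d m, ∃ i, x i = 0 := by
  induction d with
  | zero => intro m x hx; by_cases h : m = 0 <;> simp_all [seg]
  | succ d ih =>
    intro m x hx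
    rcases Nat.eq_zero_or_pos m with rfl | hm
    · simp [seg_zero] at hx
    · have := seg_mono (d + 1) ((B_strictMono d).le_apply (x := m)) hx
      rw [seg_box] at this
      exact (mem_box.mp this).2

lemma seg_subset_box {d m l : ℕ} (h : m ≤ B d l) : seg d m ⊆ box (cap d l) := by
  rw [← seg_box]; exact seg_mono d h

lemma seg_isLowerSet (d : ℕ) : ∀ m, IsLowerSet (seg d m : Set (Fin (d + 1) → ℕ)) := by
  induction d with
  | zero =>
    intro m x y hyx hx
    by_cases h : m = 0
    · simp [seg, h] at hx
    · simp only [seg, h, if_false, coe_singleton, Set.mem_singleton_iff] at hx ⊢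
      subst hx
      exact le_antisymm hyx (zero_le)
  | succ d ih =>
    intro m x y hyx hx
    rcases Nat.eq_zero_or_pos m with rfl | hm
    · simp [seg_zero] at hx
    · have hz := seg_hasZero _ _ x hx
      obtain ⟨l, s, rfl, hs⟩ := exists_B_add d hm
      rw [seg_add d l s hs.le, mem_coe, mem_union] at hx ⊢
      rcases hx with hx | hx
      · exact Or.inl (box_isLowerSet _ hyx hx)
      · obtain ⟨x', hx', rfl⟩ := mem_image.mp hx
        have hcap := (mem_box.mp (seg_subset_box hs.le hx')).1
        by_cases hp : y (pos (d + 1) l) = l / (d + 2) + 1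
        · right
          refine mem_image.mpr ⟨(pos (d + 1) l).removeNth y, ih s (fun j => ?_) hx', ?_⟩
          · have := hyx ((pos (d + 1) l).succAbove j)
            rwa [Fin.insertNth_apply_succAbove] at this
          · rw [← hp, Fin.insertNth_self_removeNth]
        · left
          refine mem_box.mpr ⟨fun j => ?_, ?_⟩
          · have h1 := hyx j
            have h2 : y (pos (d + 1) l) ≤ l / (d + 2) + 1 := by simpa using hyx (pos (d + 1) l)
            obtain rfl | ⟨j, rfl⟩ := Fin.eq_self_or_eq_succAbove (pos (d + 1) l) j
            · rw [Fin.insertNth_apply_same] at h1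
              rw [cap_pos]; change _ ≤ l / (d + 2); omega
            · rw [Fin.insertNth_apply_succAbove] at h1
              rw [cap_succAbove]
              exact h1.trans (hcap j)
          · obtain ⟨i, hi⟩ := hz
            exact ⟨i, Nat.le_zero.mp (hi ▸ hyx i)⟩

/-! ### Layers and slices -/

lemma supp_insertNth {n : ℕ} (i : Fin (n + 1)) (a : ℕ) (y : Fin n → ℕ) :
    supp (i.insertNth (α := fun _ => ℕ) a y) = (if 0 < a then 1 else 0) + supp y := by
  rw [supp, Fin.sum_univ_succAbove _ i]
  simp [supp]

lemma supp_of_pos {n : ℕ} {y : Fin n → ℕ} (h : ∀ j, 0 < y j) : supp y = n := by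
  simp [supp, h]

lemma update_insertNth_same {n : ℕ} (i : Fin (n + 1)) (a b : ℕ) (y : Fin n → ℕ) :
    Function.update (i.insertNth (α := fun _ => ℕ) a y) i b = i.insertNth b y := by
  ext j
  obtain rfl | ⟨j, rfl⟩ := Fin.eq_self_or_eq_succAbove i j <;> simp

lemma update_insertNth_succAbove {n : ℕ} (i : Fin (n + 1)) (a b : ℕ) (y : Fin n → ℕ) (k : Fin n) :
    Function.update (i.insertNth (α := fun _ => ℕ) a y) (i.succAbove k) b
      = i.insertNth a (Function.update y k b) := by
  ext j
  obtain rfl | ⟨j, rfl⟩ := Fin.eq_self_or_eq_succAbove i j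
  · simp
  · by_cases h : j = k
    · subst h; simp
    · rw [Function.update_of_ne (by simpa using h)]; simp [h]

lemma exists_insertNth {n : ℕ} (i : Fin (n + 1)) (x : Fin (n + 1) → ℕ) :
    ∃ a y, x = i.insertNth (α := fun _ => ℕ) a y :=
  ⟨x i, i.removeNth x, (Fin.insertNth_self_removeNth i x).symm⟩

lemma insertNth_inj_iff {n : ℕ} {i : Fin (n + 1)} {a b : ℕ} {y y' : Fin n → ℕ} :
    i.insertNth (α := fun _ => ℕ) a y = i.insertNth (α := fun _ => ℕ) b y' ↔ a = b ∧ y = y' := by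
  constructor
  · intro h
    have h1 := congrFun h i
    simp only [Fin.insertNth_apply_same] at h1
    subst h1
    exact ⟨rfl, insertNth_inj i a h⟩
  · rintro ⟨rfl, rfl⟩; rfl

lemma mem_image_insertNth {n : ℕ} {i : Fin (n + 1)} {a b : ℕ} {y : Fin n → ℕ}
    {L : Finset (Fin n → ℕ)} :
    i.insertNth (α := fun _ => ℕ) a y ∈ L.image (i.insertNth (α := fun _ => ℕ) b) ↔
      a = b ∧ y ∈ L := by
  simp only [mem_image, insertNth_inj_iff]
  constructor
  · rintro ⟨z, hz, rfl, rfl⟩; exact ⟨rfl, hz⟩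
  · rintro ⟨rfl, h⟩; exact ⟨y, h, rfl, rfl⟩

lemma forall_insertNth {n : ℕ} {i : Fin (n + 1)} {a : ℕ} {y : Fin n → ℕ} {p : ℕ → Prop} :
    (∀ j, p (i.insertNth (α := fun _ => ℕ) a y j)) ↔ p a ∧ ∀ j, p (y j) := by
  rw [Fin.forall_iff_succAbove i]; simp

lemma exists_insertNth_zero {n : ℕ} {i : Fin (n + 1)} {a : ℕ} {y : Fin n → ℕ} :
    (∃ j, i.insertNth (α := fun _ => ℕ) a y j = 0) ↔ a = 0 ∨ ∃ j, y j = 0 := by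
  have := forall_insertNth (i := i) (a := a) (y := y) (p := fun b => b ≠ 0)
  rw [← not_iff_not]
  push Not
  exact this

lemma disjoint_top {n : ℕ} {j : Fin (n + 1)} {N : ℕ} {U : Finset (Fin (n + 1) → ℕ)}
    (hU : ∀ x ∈ U, x j < N) (L : Finset (Fin n → ℕ)) :
    Disjoint U (L.image (j.insertNth (α := fun _ => ℕ) N)) := by
  rw [disjoint_left]
  intro x hx hx'
  obtain ⟨y, -, rfl⟩ := mem_image.mp hx'
  have := hU _ hx
  simp at this

lemma card_layer {n : ℕ} {j : Fin (n + 1)} {N : ℕ} {U : Finset (Fin (n + 1) → ℕ)}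
    (hU : ∀ x ∈ U, x j < N) (L : Finset (Fin n → ℕ)) :
    (U ∪ L.image (j.insertNth (α := fun _ => ℕ) N)).card = U.card + L.card := by
  rw [card_union_of_disjoint (disjoint_top hU L), card_image_of_injective _ (insertNth_inj _ _)]

lemma wt_layer {n : ℕ} {j : Fin (n + 1)} {N : ℕ} {U : Finset (Fin (n + 1) → ℕ)} (hN : 0 < N)
    (hU : ∀ x ∈ U, x j < N) (L : Finset (Fin n → ℕ)) :
    wt (U ∪ L.image (j.insertNth (α := fun _ => ℕ) N)) = wt U + (wt L + L.card) := by
  rw [wt, sum_union (disjoint_top hU L), sum_image (fun _ _ _ _ h => insertNth_inj _ _ h)]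
  simp only [supp_insertNth, hN, if_true, sum_add_distrib, wt, sum_const, smul_eq_mul, mul_one]
  omega

lemma fill_layer {d : ℕ} {j : Fin (d + 3)} {N : ℕ} {U : Finset (Fin (d + 3) → ℕ)} (hN : 0 < N)
    (hU : ∀ x ∈ U, x j < N) (L : Finset (Fin (d + 2) → ℕ)) :
    fill (U ∪ L.image (j.insertNth (α := fun _ => ℕ) N)) = fill U ∪
      ((fill L).filter fun y => j.insertNth (α := fun _ => ℕ) 0 y ∈ U).image
        (j.insertNth (α := fun _ => ℕ) N) := by
  ext z
  obtain ⟨a, y, rfl⟩ := exists_insertNth j z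
  have hU' : ∀ b y', j.insertNth (α := fun _ => ℕ) b y' ∈ U → b < N := fun b y' h => by
    simpa using hU _ h
  rw [mem_union, mem_fill, mem_fill, mem_image_insertNth, mem_filter, mem_fill, forall_insertNth,
    Fin.forall_iff_succAbove j, Fin.forall_iff_succAbove j]
  simp only [update_insertNth_same, update_insertNth_succAbove, mem_union, mem_image_insertNth]
  constructor
  · rintro ⟨⟨ha, hy⟩, h1, h2⟩
    have h1' : j.insertNth (α := fun _ => ℕ) 0 y ∈ U := by
      rcases h1 with h | ⟨h, -⟩
      · exact h
      · omega
    by_cases hlt : a < N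
    · left
      refine ⟨⟨ha, hy⟩, h1', fun k => ?_⟩
      rcases h2 k with h | ⟨h, -⟩
      · exact h
      · omega
    · right
      have h3 : ∀ k, a = N ∧ Function.update y k 0 ∈ L := fun k => by
        rcases h2 k with h | h
        · exact absurd (hU' _ _ h) hlt
        · exact h
      exact ⟨(h3 0).1, ⟨hy, fun k => (h3 k).2⟩, h1'⟩
  · rintro (⟨h1, h2, h3⟩ | ⟨rfl, ⟨h1, h2⟩, h3⟩)
    · exact ⟨h1, Or.inl h2, fun k => Or.inl (h3 k)⟩
    · exact ⟨⟨hN, h1⟩, Or.inl h3, fun k => Or.inr ⟨rfl, h2 k⟩⟩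

lemma fill_lt {d : ℕ} {j : Fin (d + 2)} {N : ℕ} {U : Finset (Fin (d + 2) → ℕ)}
    (hU : ∀ x ∈ U, x j < N) : ∀ x ∈ fill U, x j < N := by
  intro x hx
  obtain ⟨k, hk⟩ := exists_ne j
  have := hU _ ((mem_fill.mp hx).2 k)
  rwa [Function.update_of_ne hk.symm] at this

lemma card_fill_layer {d : ℕ} {j : Fin (d + 3)} {N : ℕ} {U : Finset (Fin (d + 3) → ℕ)}
    (hN : 0 < N) (hU : ∀ x ∈ U, x j < N) (L : Finset (Fin (d + 2) → ℕ)) :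
    (fill (U ∪ L.image (j.insertNth (α := fun _ => ℕ) N))).card = (fill U).card +
      ((fill L).filter fun y => j.insertNth (α := fun _ => ℕ) 0 y ∈ U).card := by
  rw [fill_layer hN hU, card_layer (fill_lt hU)]

/-- The points with a zero coordinate of the slice of `A` at height `a` in direction `i`. -/
def sl {n : ℕ} (i : Fin (n + 1)) (a : ℕ) (A : Finset (Fin (n + 1) → ℕ)) : Finset (Fin n → ℕ) :=
  ((A.filter fun x => x i = a).image fun x => i.removeNth x).filter fun y => ∃ j, y j = 0

/-- The points with positive coordinates of the slice of `A` at height `0` in direction `i`. -/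
def ker {n : ℕ} (i : Fin (n + 1)) (A : Finset (Fin (n + 1) → ℕ)) : Finset (Fin n → ℕ) :=
  ((A.filter fun x => x i = 0).image fun x => i.removeNth x).filter fun y => ∀ j, 0 < y j

lemma mem_slice {n : ℕ} {i : Fin (n + 1)} {a : ℕ} {A : Finset (Fin (n + 1) → ℕ)}
    {y : Fin n → ℕ} : (y ∈ (A.filter fun x => x i = a).image fun x => i.removeNth x) ↔
      i.insertNth (α := fun _ => ℕ) a y ∈ A := by
  simp only [mem_image, mem_filter]
  constructor
  · rintro ⟨x, ⟨hx, rfl⟩, rfl⟩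
    rwa [Fin.insertNth_self_removeNth]
  · intro h
    exact ⟨_, ⟨h, by simp⟩, by simp⟩

lemma mem_sl {n : ℕ} {i : Fin (n + 1)} {a : ℕ} {A : Finset (Fin (n + 1) → ℕ)}
    {y : Fin n → ℕ} : y ∈ sl i a A ↔ i.insertNth (α := fun _ => ℕ) a y ∈ A ∧ ∃ j, y j = 0 := by
  rw [sl, mem_filter, mem_slice]

lemma mem_ker {n : ℕ} {i : Fin (n + 1)} {A : Finset (Fin (n + 1) → ℕ)}
    {y : Fin n → ℕ} : y ∈ ker i A ↔ i.insertNth (α := fun _ => ℕ) 0 y ∈ A ∧ ∀ j, 0 < y j := by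
  rw [ker, mem_filter, mem_slice]

lemma insertNth_mono {n : ℕ} {i : Fin (n + 1)} {a b : ℕ} {y y' : Fin n → ℕ} (h : a ≤ b)
    (h' : y ≤ y') :
    i.insertNth (α := fun _ => ℕ) a y ≤ i.insertNth (α := fun _ => ℕ) b y' := by
  intro j
  obtain rfl | ⟨j, rfl⟩ := Fin.eq_self_or_eq_succAbove i j
  · simpa
  · simpa using h' j

lemma sl_isLowerSet {n : ℕ} {A : Finset (Fin (n + 1) → ℕ)}
    (hA : IsLowerSet (A : Set (Fin (n + 1) → ℕ))) (i : Fin (n + 1)) (a : ℕ) :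
    IsLowerSet (sl i a A : Set (Fin n → ℕ)) := by
  intro x y hyx hx
  rw [mem_coe, mem_sl] at *
  obtain ⟨h, j, hj⟩ := hx
  exact ⟨hA (insertNth_mono le_rfl hyx) h, j, Nat.le_zero.mp (hj ▸ hyx j)⟩

lemma sl_anti {n : ℕ} {A : Finset (Fin (n + 1) → ℕ)}
    (hA : IsLowerSet (A : Set (Fin (n + 1) → ℕ))) (i : Fin (n + 1)) {a b : ℕ} (hab : a ≤ b) :
    sl i b A ⊆ sl i a A := by
  intro y hy
  rw [mem_sl] at *
  exact ⟨hA (insertNth_mono hab le_rfl) hy.1, hy.2⟩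

lemma sl_hasZero {n : ℕ} (i : Fin (n + 1)) (a : ℕ) (A : Finset (Fin (n + 1) → ℕ)) :
    ∀ y ∈ sl i a A, ∃ j, y j = 0 := fun _ hy => (mem_sl.mp hy).2

lemma ker_subset_fill {d : ℕ} {A : Finset (Fin (d + 3) → ℕ)}
    (hA : IsLowerSet (A : Set (Fin (d + 3) → ℕ))) (i : Fin (d + 3)) :
    ker i A ⊆ fill (sl i 0 A) := by
  intro y hy
  rw [mem_ker] at hy
  rw [mem_fill]
  refine ⟨hy.2, fun k => mem_sl.mpr ⟨hA (insertNth_mono le_rfl ?_) hy.1, k, by simp⟩⟩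
  intro j
  by_cases h : j = k
  · subst h; simp
  · simp [h]

lemma eq_layer {n : ℕ} {A : Finset (Fin (n + 1) → ℕ)} (hz : ∀ x ∈ A, ∃ i, x i = 0)
    {j : Fin (n + 1)} {M : ℕ} (hM : ∀ x ∈ A, x j ≤ M + 1) :
    A = (A.filter fun x => x j < M + 1) ∪
      (sl j (M + 1) A).image (j.insertNth (α := fun _ => ℕ) (M + 1)) := by
  ext x
  obtain ⟨a, y, rfl⟩ := exists_insertNth j x
  simp only [mem_union, mem_filter, mem_image_insertNth, mem_sl, Fin.insertNth_apply_same]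
  constructor
  · intro h
    have h1 := hM _ h
    have h2 := hz _ h
    rw [Fin.insertNth_apply_same] at h1
    rw [exists_insertNth_zero] at h2
    rcases Nat.lt_or_ge a (M + 1) with h3 | h3
    · exact Or.inl ⟨h, h3⟩
    · have : a = M + 1 := by omega
      subst this
      exact Or.inr ⟨rfl, h, h2.resolve_left (by omega)⟩
  · rintro (h | ⟨rfl, h, -⟩)
    · exact h.1
    · exact h

/-- The set whose slice at height `a ≤ M` in direction `i` consists of `L a`, together with `K`
for `a = 0`. -/
def build {n : ℕ} (i : Fin (n + 1)) (M : ℕ) (L : ℕ → Finset (Fin n → ℕ))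
    (K : Finset (Fin n → ℕ)) : Finset (Fin (n + 1) → ℕ) :=
  (range (M + 1)).biUnion (fun a => (L a).image (i.insertNth (α := fun _ => ℕ) a)) ∪
    K.image (i.insertNth (α := fun _ => ℕ) 0)

lemma mem_build {n : ℕ} {i : Fin (n + 1)} {M : ℕ} {L : ℕ → Finset (Fin n → ℕ)}
    {K : Finset (Fin n → ℕ)} {a : ℕ} {y : Fin n → ℕ} :
    i.insertNth (α := fun _ => ℕ) a y ∈ build i M L K ↔
      (a ≤ M ∧ y ∈ L a) ∨ (a = 0 ∧ y ∈ K) := by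
  simp only [build, mem_union, mem_biUnion, mem_range, mem_image_insertNth]
  constructor
  · rintro (⟨b, hb, rfl, h⟩ | h)
    · exact Or.inl ⟨by omega, h⟩
    · exact Or.inr h
  · rintro (⟨h1, h2⟩ | h)
    · exact Or.inl ⟨a, by omega, rfl, h2⟩
    · exact Or.inr h

lemma build_sl {n : ℕ} {A : Finset (Fin (n + 1) → ℕ)} (hz : ∀ x ∈ A, ∃ i, x i = 0)
    {i : Fin (n + 1)} {M : ℕ} (hM : ∀ x ∈ A, x i ≤ M) :
    build i M (fun a => sl i a A) (ker i A) = A := by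
  ext x
  obtain ⟨a, y, rfl⟩ := exists_insertNth i x
  rw [mem_build, mem_sl, mem_ker]
  constructor
  · rintro (⟨-, h, -⟩ | ⟨rfl, h, -⟩) <;> exact h
  · intro h
    have h1 := hM _ h
    have h2 := hz _ h
    rw [Fin.insertNth_apply_same] at h1
    rw [exists_insertNth_zero] at h2
    by_cases hy : ∃ j, y j = 0
    · exact Or.inl ⟨h1, h, hy⟩
    · have ha := h2.resolve_right hy
      subst ha
      exact Or.inr ⟨rfl, h, fun j => Nat.pos_of_ne_zero fun hj => hy ⟨j, hj⟩⟩

section build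

variable {n : ℕ} {i : Fin (n + 1)} {M : ℕ} {L : ℕ → Finset (Fin n → ℕ)} {K : Finset (Fin n → ℕ)}

lemma sum_build (hL : ∀ a, ∀ y ∈ L a, ∃ j, y j = 0) (hK : ∀ y ∈ K, ∀ j, 0 < y j)
    (f : (Fin (n + 1) → ℕ) → ℕ) : ∑ x ∈ build i M L K, f x =
      ∑ a ∈ range (M + 1), ∑ y ∈ L a, f (i.insertNth (α := fun _ => ℕ) a y) +
        ∑ y ∈ K, f (i.insertNth (α := fun _ => ℕ) 0 y) := by
  rw [build, sum_union, sum_biUnion, sum_image (fun _ _ _ _ h => insertNth_inj _ _ h)]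
  · congr 1
    exact sum_congr rfl fun a _ => sum_image (fun _ _ _ _ h => insertNth_inj _ _ h)
  · intro a _ b _ hab
    rw [Function.onFun, disjoint_left]
    intro x hx hx'
    obtain ⟨c, y, rfl⟩ := exists_insertNth i x
    rw [mem_image_insertNth] at hx hx'
    exact hab (hx.1.symm.trans hx'.1)
  · rw [disjoint_left]
    intro x hx hx'
    obtain ⟨c, y, rfl⟩ := exists_insertNth i x
    rw [mem_image_insertNth] at hx'
    rw [mem_biUnion] at hx
    obtain ⟨b, -, hb⟩ := hx
    obtain ⟨j, hj⟩ := hL b y (mem_image_insertNth.mp hb).2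
    have := hK y hx'.2 j
    omega

lemma card_build (hL : ∀ a, ∀ y ∈ L a, ∃ j, y j = 0) (hK : ∀ y ∈ K, ∀ j, 0 < y j) :
    (build i M L K).card = (L 0).card + ∑ a ∈ range M, (L (a + 1)).card + K.card := by
  rw [card_eq_sum_ones, sum_build hL hK, sum_range_succ']
  simp only [← card_eq_sum_ones]
  omega

lemma wt_build (hL : ∀ a, ∀ y ∈ L a, ∃ j, y j = 0) (hK : ∀ y ∈ K, ∀ j, 0 < y j) :
    wt (build i M L K) =
      wt (L 0) + ∑ a ∈ range M, (wt (L (a + 1)) + (L (a + 1)).card) + n * K.card := by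
  rw [wt, sum_build hL hK, sum_range_succ']
  simp only [supp_insertNth, Nat.lt_irrefl, if_false, Nat.succ_pos, if_true, zero_add,
    sum_add_distrib, sum_const, smul_eq_mul, mul_one]
  rw [sum_congr rfl fun y hy => supp_of_pos (hK y hy)]
  simp only [sum_const, smul_eq_mul, wt]
  rw [mul_comm n]
  omega

end build

lemma mem_fill_build {d : ℕ} {i : Fin (d + 3)} {M : ℕ} {L : ℕ → Finset (Fin (d + 2) → ℕ)}
    {K : Finset (Fin (d + 2) → ℕ)} (hL : ∀ a, ∀ y ∈ L a, ∃ j, y j = 0) {a : ℕ} {y : Fin (d + 2) → ℕ} :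
    i.insertNth (α := fun _ => ℕ) a y ∈ fill (build i M L K) ↔
      (0 < a ∧ a ≤ M) ∧ y ∈ fill (L a) ∩ K := by
  rw [mem_fill, forall_insertNth, Fin.forall_iff_succAbove i, mem_inter, mem_fill]
  simp only [update_insertNth_same, update_insertNth_succAbove, mem_build]
  constructor
  · rintro ⟨⟨h1, h2⟩, h3, h4⟩
    have h5 : ∀ k, a ≤ M ∧ Function.update y k 0 ∈ L a := fun k =>
      (h4 k).resolve_right fun h => by omega
    refine ⟨⟨h1, (h5 0).1⟩, ⟨h2, fun k => (h5 k).2⟩, ?_⟩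
    rcases h3 with ⟨-, h⟩ | ⟨-, h⟩
    · obtain ⟨j, hj⟩ := hL _ _ h
      have := h2 j
      omega
    · exact h
  · rintro ⟨⟨h1, h2⟩, ⟨h3, h4⟩, h5⟩
    exact ⟨⟨h1, h3⟩, Or.inr ⟨trivial, h5⟩, fun k => Or.inl ⟨h2, h4 k⟩⟩

lemma card_fill_build {d : ℕ} {i : Fin (d + 3)} {M : ℕ} {L : ℕ → Finset (Fin (d + 2) → ℕ)}
    {K : Finset (Fin (d + 2) → ℕ)} (hL : ∀ a, ∀ y ∈ L a, ∃ j, y j = 0) :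
    (fill (build i M L K)).card = ∑ a ∈ range M, (fill (L (a + 1)) ∩ K).card := by
  have h : fill (build i M L K) = build i M
      (fun a => if a = 0 then ∅ else fill (L a) ∩ K) ∅ := by
    ext z
    obtain ⟨a, y, rfl⟩ := exists_insertNth i z
    rw [mem_fill_build hL, mem_build]
    by_cases ha : a = 0
    · simp [ha]
    · simp [ha, Nat.pos_of_ne_zero ha]
  rw [h, build, image_empty, union_empty, card_biUnion, sum_range_succ']
  · simp [card_image_of_injective _ (insertNth_inj _ _)]
  · intro a _ b _ hab
    rw [Function.onFun, disjoint_left]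
    intro x hx hx'
    obtain ⟨c, y, rfl⟩ := exists_insertNth i x
    rw [mem_image_insertNth] at hx hx'
    exact hab (hx.1.symm.trans hx'.1)

/-! ### The functionals on initial segments -/

lemma box_lt_layer (d l : ℕ) :
    ∀ x ∈ box (cap (d + 1) l), x (pos (d + 1) l) < l / (d + 2) + 1 := fun x hx => by
  have := (mem_box.mp hx).1 (pos (d + 1) l)
  have e : cap (d + 1) l (pos (d + 1) l) = l / (d + 2) := cap_pos (d + 1) l
  omega

lemma wt_seg_add (d l s : ℕ) (hs : s ≤ B d (red d l)) : wt (seg (d + 1) (B (d + 1) l + s)) =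
    wt (seg (d + 1) (B (d + 1) l)) + (wt (seg d s) + s) := by
  rw [seg_add d l s hs, wt_layer (Nat.succ_pos _) (box_lt_layer d l), card_seg d _ s hs, seg_box]

lemma fill_seg_add (d l s : ℕ) (hs : s ≤ B (d + 1) (red (d + 1) l)) :
    (fill (seg (d + 2) (B (d + 2) l + s))).card =
      (fill (seg (d + 2) (B (d + 2) l))).card + (fill (seg (d + 1) s)).card := by
  rw [seg_add (d + 1) l s hs]
  refine (card_fill_layer (Nat.succ_pos _) (box_lt_layer (d + 1) l) _).trans ?_
  rw [seg_box, filter_true_of_mem]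
  intro y hy
  have h1 := fill_mono (seg_subset_box hs) hy
  rw [fill_box, Fintype.mem_piFinset] at h1
  refine mem_box.mpr ⟨fun j => ?_, pos (d + 2) l, by simp⟩
  obtain rfl | ⟨j, rfl⟩ := Fin.eq_self_or_eq_succAbove (pos (d + 2) l) j
  · simp
  · rw [Fin.insertNth_apply_succAbove, cap_succAbove]
    exact (mem_Icc.mp (h1 j)).2

lemma seg_one (d : ℕ) : seg d 1 = {0} := by
  have e : seg d 1 = box (cap d 0) := by rw [← seg_box, B_zero]
  rw [e]
  have : (box (cap d 0)).card = 1 := B_zero d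
  rw [card_eq_one] at this
  obtain ⟨a, ha⟩ := this
  have h0 : (0 : Fin (d + 1) → ℕ) ∈ box (cap d 0) := mem_box.mpr ⟨fun _ => Nat.zero_le _, 0, rfl⟩
  rw [ha] at h0 ⊢
  rw [mem_singleton.mp h0]

lemma fill_seg_one (d : ℕ) : (fill (seg (d + 1) 1)).card = 0 := by
  rw [card_eq_zero, eq_empty_iff_forall_notMem]
  intro z hz
  rw [mem_fill, seg_one] at hz
  have h := congrFun (mem_singleton.mp (hz.2 0)) 1
  have := hz.1 1
  simp at h
  omega

lemma fill_seg_zero (d : ℕ) : (fill (seg (d + 1) 0)).card = 0 := by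
  rw [card_eq_zero, eq_empty_iff_forall_notMem]
  intro z hz
  rw [mem_fill, seg_zero] at hz
  exact absurd (hz.2 0) (notMem_empty _)

lemma blocks_wt (d : ℕ) : Blocks (B (d + 1)) (fun l => B d (red d l))
    (fun m => wt (seg (d + 1) m)) (fun m => wt (seg d m) + m) where
  B_zero := B_zero _
  B_succ := B_succ d
  P_pos _ := B_pos _ _
  P_mono := (B_mono' d).comp (red_mono d)
  G_zero := by simp [seg_zero, wt]
  G_one := by simp [seg_one, wt, supp]
  G_add l s hs := wt_seg_add d l s hs

lemma blocks_fill (d : ℕ) : Blocks (B (d + 2)) (fun l => B (d + 1) (red (d + 1) l))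
    (fun m => (fill (seg (d + 2) m)).card) (fun m => (fill (seg (d + 1) m)).card) where
  B_zero := B_zero _
  B_succ := B_succ (d + 1)
  P_pos _ := B_pos _ _
  P_mono := (B_mono' (d + 1)).comp (red_mono (d + 1))
  G_zero := fill_seg_zero _
  G_one := fill_seg_one _
  G_add l s hs := fill_seg_add d l s hs

lemma windowed_wt (d : ℕ) : Windowed (B d) (fun m => wt (seg d m)) := by
  induction d with
  | zero =>
    have h : ∀ m, wt (seg 0 m) = 0 := fun m => by
      by_cases h : m = 0 <;> simp [seg, h, wt, supp]
    constructor <;> simp [h]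
  | succ d ih => exact (blocks_wt d).windowed (ih.add_id.comp (red d))

lemma B_one (l : ℕ) : B 1 l = l + 1 := by
  have h := card_box_add (cap 1 l)
  have h2 := sum_cap 1 l
  rw [Fin.prod_univ_two, Fin.prod_univ_two] at h
  rw [Fin.sum_univ_two] at h2
  rw [B]
  nlinarith

lemma fill_seg_one_dim (l : ℕ) : (fill (seg 1 (l + 1))).card = cap 1 l 0 * cap 1 l 1 := by
  have e : seg 1 (l + 1) = box (cap 1 l) := by rw [← seg_box, B_one]
  rw [e, card_fill_box, Fin.prod_univ_two]

lemma fill_seg_one_succ (m : ℕ) :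
    (fill (seg 1 (m + 1))).card = (fill (seg 1 m)).card + m / 2 := by
  cases m with
  | zero => rw [fill_seg_zero, fill_seg_one]
  | succ l =>
    rw [fill_seg_one_dim, fill_seg_one_dim]
    obtain ⟨k, rfl | rfl⟩ : ∃ k, l = 2 * k ∨ l = 2 * k + 1 := ⟨l / 2, by omega⟩
    · simp only [cap]
      rw [show (2 * k + 1) / (1 + 1) = k by omega, show 2 * k / (1 + 1) = k by omega,
        show (2 * k + 1) % (1 + 1) = 1 by omega, show 2 * k % (1 + 1) = 0 by omega]
      simp; ring
    · simp only [cap]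
      rw [show (2 * k + 1 + 1) / (1 + 1) = k + 1 by omega,
        show (2 * k + 1) / (1 + 1) = k by omega,
        show (2 * k + 1 + 1) % (1 + 1) = 0 by omega, show (2 * k + 1) % (1 + 1) = 1 by omega]
      simp; ring

lemma windowed_fill (d : ℕ) :
    Windowed (B (d + 1)) (fun m => (fill (seg (d + 1) m)).card) := by
  induction d with
  | zero =>
    refine Windowed.of_convex (fill_seg_zero 0) fun a b hab => ?_
    have h1 := fill_seg_one_succ a
    have h2 := fill_seg_one_succ b
    have : a / 2 ≤ b / 2 := Nat.div_le_div_right hab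
    change (fill (seg 1 (a + 1))).card + (fill (seg 1 b)).card ≤
      (fill (seg 1 a)).card + (fill (seg 1 (b + 1))).card
    omega
  | succ d ih => exact (blocks_fill d).windowed (ih.comp (red (d + 1)))

/-! ### Down-sets and the induction -/

/-- Down-sets among the points with a zero coordinate. -/
structure Good {n : ℕ} (A : Finset (Fin n → ℕ)) : Prop where
  lower : IsLowerSet (A : Set (Fin n → ℕ))
  hasZero : ∀ x ∈ A, ∃ i, x i = 0

/-- `A` is bounded, in both functionals, by the initial segment of the same size. -/
def Bounded {d : ℕ} (A : Finset (Fin (d + 2) → ℕ)) : Prop :=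
  wt A ≤ wt (seg (d + 1) A.card) ∧ (fill A).card ≤ (fill (seg (d + 1) A.card)).card

lemma good_box {n : ℕ} (c : Fin n → ℕ) : Good (box c) :=
  ⟨box_isLowerSet c, fun _ hx => (mem_box.mp hx).2⟩

lemma good_seg (d m : ℕ) : Good (seg d m) := ⟨seg_isLowerSet d m, seg_hasZero d m⟩

lemma Good.sl {n : ℕ} {A : Finset (Fin (n + 1) → ℕ)} (hA : Good A) (i : Fin (n + 1)) (a : ℕ) :
    Good (sl i a A) := ⟨sl_isLowerSet hA.lower i a, sl_hasZero i a A⟩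

lemma Good.filter_lt {n : ℕ} {A : Finset (Fin n → ℕ)} (hA : Good A) (j : Fin n) (N : ℕ) :
    Good (A.filter fun x => x j < N) where
  lower x y hyx hx := by
    rw [mem_coe, mem_filter] at *
    exact ⟨hA.lower hyx hx.1, (hyx j).trans_lt hx.2⟩
  hasZero x hx := hA.hasZero x (mem_filter.mp hx).1

lemma Good.zero_mem {n : ℕ} {A : Finset (Fin n → ℕ)} (hA : Good A) (h : A.Nonempty) : 0 ∈ A := by
  obtain ⟨x, hx⟩ := h
  exact hA.lower (fun j => Nat.zero_le (x j)) hx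

/-- Removing the top layer in direction `j` reduces the bounds for `A` to those for the layer and
for the rest, as soon as the rest is large compared to the layer. -/
lemma bounded_of_peel {d : ℕ} {A : Finset (Fin (d + 3) → ℕ)} (hA : Good A) {j : Fin (d + 3)}
    {M l : ℕ} (hM : ∀ x ∈ A, x j ≤ M + 1)
    (h1 : Bounded (A.filter fun x => x j < M + 1)) (h2 : Bounded (sl j (M + 1) A))
    (ht : (sl j (M + 1) A).card ≤ B (d + 1) (red (d + 1) l))
    (hl : B (d + 2) l + (sl j (M + 1) A).card ≤ A.card) : Bounded A := by
  have e := eq_layer hA.hasZero hM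
  have hU : ∀ x ∈ A.filter (fun x => x j < M + 1), x j < M + 1 := fun x hx => (mem_filter.mp hx).2
  have ec := congrArg card e
  have ew := congrArg wt e
  have ef := congrArg (fun A => (fill A).card) e
  rw [card_layer hU] at ec
  rw [wt_layer (Nat.succ_pos _) hU] at ew
  rw [card_fill_layer (Nat.succ_pos _) hU] at ef
  have hf := card_le_card (filter_subset
    (fun y => j.insertNth (α := fun _ => ℕ) 0 y ∈ A.filter (fun x => x j < M + 1))
    (fill (sl j (M + 1) A)))
  have hx : B (d + 2) l ≤ (A.filter fun x => x j < M + 1).card := by omega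
  have kw : wt (seg (d + 2) (A.filter fun x => x j < M + 1).card) +
      (wt (seg (d + 1) (sl j (M + 1) A).card) + (sl j (M + 1) A).card) ≤
      wt (seg (d + 2) ((A.filter fun x => x j < M + 1).card + (sl j (M + 1) A).card)) :=
    (blocks_wt (d + 1)).start_le ((windowed_wt (d + 1)).add_id.comp (red (d + 1))) hx ht
  have kf : (fill (seg (d + 2) (A.filter fun x => x j < M + 1).card)).card +
      (fill (seg (d + 1) (sl j (M + 1) A).card)).card ≤
      (fill (seg (d + 2)
        ((A.filter fun x => x j < M + 1).card + (sl j (M + 1) A).card))).card :=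
    (blocks_fill d).start_le ((windowed_fill d).comp (red (d + 1))) hx ht
  rw [← ec] at kw kf
  have a1 : wt (A.filter fun x => x j < M + 1) ≤
      wt (seg (d + 2) (A.filter fun x => x j < M + 1).card) := h1.1
  have a2 : (fill (A.filter fun x => x j < M + 1)).card ≤
      (fill (seg (d + 2) (A.filter fun x => x j < M + 1).card)).card := h1.2
  have b1 : wt _ ≤ wt (seg (d + 1) _) := h2.1
  have b2 : (fill _).card ≤ (fill (seg (d + 1) _)).card := h2.2
  constructor
  · change wt A ≤ wt (seg (d + 2) A.card)
    omega
  · change (fill A).card ≤ (fill (seg (d + 2) A.card)).card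
    omega

/-! ### Dimension two -/

lemma bounded_two {A : Finset (Fin 2 → ℕ)} (hA : Good A) : Bounded (d := 0) A := by
  have hwt : ∀ A : Finset (Fin 2 → ℕ), Good A → A.Nonempty → wt A + 1 = A.card := by
    intro A hA hne
    have h0 := hA.zero_mem hne
    have h1 : ∑ x ∈ A, (if x = 0 then 1 else 0) = 1 := by simp [h0]
    rw [wt, ← h1, ← sum_add_distrib, card_eq_sum_ones]
    refine sum_congr rfl fun x hx => ?_
    have h2 : x = 0 ↔ x 0 = 0 ∧ x 1 = 0 := by
      rw [funext_iff, Fin.forall_fin_two]; rfl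
    obtain ⟨i, hi⟩ := hA.hasZero x hx
    simp only [supp, Fin.sum_univ_two, h2]
    fin_cases i
    · simp only [Fin.zero_eta] at hi
      rw [hi]; by_cases h : x 1 = 0 <;> simp [h, Nat.pos_iff_ne_zero]
    · simp only [Fin.mk_one] at hi
      rw [hi]; by_cases h : x 0 = 0 <;> simp [h, Nat.pos_iff_ne_zero]
  rcases A.eq_empty_or_nonempty with rfl | hne
  · refine ⟨by simp [wt], ?_⟩
    rw [card_eq_zero.mpr]
    · exact Nat.zero_le _
    · rw [eq_empty_iff_forall_notMem]
      exact fun z hz => absurd ((mem_fill.mp hz).2 0) (notMem_empty _)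
  constructor
  · have h1 := hwt A hA hne
    have h2 := hwt _ (good_seg 1 A.card) (card_pos.mp (by
      rw [card_seg']; exact card_pos.mpr hne))
    rw [card_seg'] at h2
    change wt A ≤ wt (seg 1 A.card)
    omega
  · obtain ⟨x, hx, hxm⟩ := exists_max_image A (fun x => x 0) hne
    obtain ⟨y, hy, hym⟩ := exists_max_image A (fun x => x 1) hne
    -- in dimension two, a down-set is the box of its maximal coordinates
    have hbox : A = box ![x 0, y 1] := by
      ext z
      rw [mem_box, Fin.forall_fin_two, Fin.exists_fin_two]
      constructor
      · intro hz
        refine ⟨⟨hxm z hz, hym z hz⟩, ?_⟩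
        simpa [Fin.exists_fin_two] using hA.hasZero z hz
      · rintro ⟨⟨h1, h2⟩, h3 | h3⟩
        · refine hA.lower (fun j => ?_) hy
          fin_cases j
          · simp [h3]
          · exact h2
        · refine hA.lower (fun j => ?_) hx
          fin_cases j
          · exact h1
          · simp [h3]
    have hc := card_box_add ![x 0, y 1]
    rw [← hbox] at hc
    simp only [Fin.prod_univ_two, Matrix.cons_val_zero, Matrix.cons_val_one] at hc
    have hc' : A.card = x 0 + y 1 + 1 := by nlinarith
    have hf : (fill A).card = x 0 * y 1 := by
      rw [hbox, card_fill_box (d := 0)]; simp [Fin.prod_univ_two]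
    have hs := sum_cap 1 (x 0 + y 1)
    rw [Fin.sum_univ_two] at hs
    have h1 := cap_le_cap 1 (x 0 + y 1) 0 1
    have h2 := cap_le_cap 1 (x 0 + y 1) 1 0
    change (fill A).card ≤ (fill (seg 1 A.card)).card
    rw [hf, hc', fill_seg_one_dim]
    generalize cap 1 (x 0 + y 1) 0 = u at *
    generalize cap 1 (x 0 + y 1) 1 = v at *
    generalize x 0 = p at *
    generalize y 1 = q at *
    clear hwt hbox hym hxm
    rcases le_total p q with hpq | hpq
    · obtain ⟨e, rfl⟩ := Nat.exists_eq_add_of_le hpq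
      have : (u = v ∨ u = v + 1) ∨ v = u + 1 := by omega
      rcases this with (h | h) | h
      · subst h
        obtain ⟨f, rfl⟩ : ∃ f, e = 2 * f := ⟨u - p, by omega⟩
        have : u = p + f := by omega
        subst this; nlinarith
      · subst h
        obtain ⟨f, rfl⟩ : ∃ f, e = 2 * f + 1 := ⟨v - p, by omega⟩
        have : v = p + f := by omega
        subst this; nlinarith
      · subst h
        obtain ⟨f, rfl⟩ : ∃ f, e = 2 * f + 1 := ⟨u - p, by omega⟩
        have : u = p + f := by omega
        subst this; nlinarith
    · obtain ⟨e, rfl⟩ := Nat.exists_eq_add_of_le hpq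
      have : (u = v ∨ u = v + 1) ∨ v = u + 1 := by omega
      rcases this with (h | h) | h
      · subst h
        obtain ⟨f, rfl⟩ : ∃ f, e = 2 * f := ⟨u - q, by omega⟩
        have : u = q + f := by omega
        subst this; nlinarith
      · subst h
        obtain ⟨f, rfl⟩ : ∃ f, e = 2 * f + 1 := ⟨v - q, by omega⟩
        have : v = q + f := by omega
        subst this; nlinarith
      · subst h
        obtain ⟨f, rfl⟩ : ∃ f, e = 2 * f + 1 := ⟨u - q, by omega⟩
        have : u = q + f := by omega
        subst this; nlinarith

/-! ### Balanced products -/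

lemma prod_balanced {n q : ℕ} {c : Fin n → ℕ} (hc : ∀ j, q ≤ c j ∧ c j ≤ q + 1) (g : ℕ → ℕ) :
    ∏ j, g (c j) = g (q + 1) ^ (∑ j, c j - n * q) * g q ^ (n - (∑ j, c j - n * q)) := by
  have h1 : ∀ j, c j = q + if c j = q + 1 then 1 else 0 := fun j => by
    have := hc j; split_ifs <;> omega
  have h2 : ∑ j, c j - n * q = (univ.filter fun j => c j = q + 1).card := by
    rw [sum_congr rfl fun j _ => h1 j, sum_add_distrib, card_filter]
    simp
  have h3 : ∏ j, g (c j) = ∏ j, if c j = q + 1 then g (q + 1) else g q :=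
    prod_congr rfl fun j _ => by
      have := hc j
      split_ifs with h
      · rw [h]
      · rw [show c j = q by omega]
  have h4 := card_filter_add_card_filter_not (s := (univ : Finset (Fin n)))
    (fun j => c j = q + 1)
  rw [h3, prod_ite, prod_const, prod_const, h2]
  congr 2
  simp only [card_univ, Fintype.card_fin] at h4
  omega

/-- Products over balanced sides depend only on the sum of the sides. -/
lemma prod_balanced_eq {d q : ℕ} {c : Fin (d + 1) → ℕ} (hc : ∀ j, q ≤ c j ∧ c j ≤ q + 1)
    (g : ℕ → ℕ) : ∏ j, g (c j) = ∏ j, g (cap d (∑ j, c j) j) := by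
  have h1 : (d + 1) * q ≤ ∑ j, c j := by
    have := sum_le_sum (s := univ) fun j _ => (hc j).1
    simpa using this
  have h2 : ∑ j, c j ≤ (d + 1) * (q + 1) := by
    have := sum_le_sum (s := univ) fun j _ => (hc j).2
    simpa using this
  rw [prod_balanced hc, prod_balanced (q := q) (fun j => ⟨le_cap h1 j, cap_le h2 j⟩), sum_cap]

lemma card_box_balanced {d q : ℕ} {c : Fin (d + 1) → ℕ} (hc : ∀ j, q ≤ c j ∧ c j ≤ q + 1) :
    (box c).card = B d (∑ j, c j) := by
  have h1 := card_box_add c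
  have h2 := card_box_add (cap d (∑ j, c j))
  rw [prod_balanced_eq hc (fun x => x + 1), prod_balanced_eq hc (fun x => x), ← h2] at h1
  exact Nat.add_right_cancel h1

/-! ### Interpolation and increments -/

/-- Down-sets among the points with positive coordinates. -/
structure PosLower {n : ℕ} (K : Finset (Fin n → ℕ)) : Prop where
  pos : ∀ y ∈ K, ∀ j, 0 < y j
  lower : ∀ y ∈ K, ∀ y' ≤ y, (∀ j, 0 < y' j) → y' ∈ K

lemma Good.posLower_fill {d : ℕ} {A : Finset (Fin (d + 2) → ℕ)} (hA : Good A) :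
    PosLower (fill A) where
  pos y hy := (mem_fill.mp hy).1
  lower y hy y' h hp := by
    rw [mem_fill] at hy ⊢
    refine ⟨hp, fun i => hA.lower (fun j => ?_) (hy.2 i)⟩
    by_cases hj : j = i
    · subst hj; simp
    · simpa [hj] using h j

lemma PosLower.interpolate {n : ℕ} {U V : Finset (Fin n → ℕ)} (hU : PosLower U) (hV : PosLower V)
    (hUV : U ⊆ V) {k : ℕ} (h1 : U.card ≤ k) (h2 : k ≤ V.card) :
    ∃ K, PosLower K ∧ U ⊆ K ∧ K ⊆ V ∧ K.card = k := by
  induction k, h1 using Nat.le_induction with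
  | base => exact ⟨U, hU, Subset.rfl, hUV, rfl⟩
  | succ k _ ih =>
    obtain ⟨K, hK, hUK, hKV, rfl⟩ := ih (by omega)
    have hne : (V \ K).Nonempty := by
      rw [← card_pos, card_sdiff_of_subset hKV]; omega
    obtain ⟨x, hx⟩ := exists_minimal hne
    have hxm := mem_sdiff.mp hx.prop
    refine ⟨insert x K, ⟨?_, ?_⟩, hUK.trans (subset_insert _ _),
      insert_subset hxm.1 hKV, card_insert_of_notMem hxm.2⟩
    · intro y hy
      rcases mem_insert.mp hy with rfl | hy
      · exact hV.pos y hxm.1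
      · exact hK.pos y hy
    · intro y hy y' hle hp
      rcases mem_insert.mp hy with rfl | hy
      · by_cases hy' : y' ∈ K
        · exact mem_insert_of_mem hy'
        · have := hx.le_of_le (mem_sdiff.mpr ⟨hV.lower y hxm.1 y' hle hp, hy'⟩) hle
          exact mem_insert.mpr (Or.inl (le_antisymm hle this))
      · exact mem_insert_of_mem (hK.lower y hy y' hle hp)

lemma fill_seg_mono (d : ℕ) : Monotone fun m => (fill (seg (d + 1) m)).card :=
  fun _ _ h => card_le_card (fill_mono (seg_mono _ h))

/-- For every possible size there is a positive down-set nested with all `fill (seg (d + 1) l)`. -/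
lemma exists_nested (d : ℕ) {k l₀ : ℕ} (h : k ≤ (fill (seg (d + 1) l₀)).card) :
    ∃ K : Finset (Fin (d + 2) → ℕ), PosLower K ∧ K.card = k ∧
      ∀ l, fill (seg (d + 1) l) ⊆ K ∨ K ⊆ fill (seg (d + 1) l) := by
  classical
  have hex : ∃ l, k ≤ (fill (seg (d + 1) l)).card := ⟨l₀, h⟩
  have h1 := Nat.find_spec hex
  have h2 := fun l => Nat.find_min hex (m := l)
  generalize Nat.find hex = l at h1 h2
  cases l with
  | zero =>
    rw [fill_seg_zero] at h1
    refine ⟨∅, ⟨by simp, by simp⟩, by rw [card_empty]; omega, fun l => Or.inr (empty_subset _)⟩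
  | succ l =>
    have h3 := h2 l (Nat.lt_succ_self l)
    obtain ⟨K, hK, hUK, hKV, hk⟩ := (good_seg (d + 1) l).posLower_fill.interpolate
      (good_seg (d + 1) (l + 1)).posLower_fill (fill_mono (seg_subset_succ _ l))
      (k := k) (by omega) h1
    refine ⟨K, hK, hk, fun l' => ?_⟩
    rcases Nat.lt_or_ge l l' with h4 | h4
    · exact Or.inr (hKV.trans (fill_mono (seg_mono _ h4)))
    · exact Or.inl ((fill_mono (seg_mono _ h4)).trans hUK)

lemma exists_seg_succ (d m : ℕ) :
    ∃ x, seg (d + 1) (m + 1) = insert x (seg (d + 1) m) ∧ x ∉ seg (d + 1) m := by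
  have h := card_sdiff_of_subset (seg_subset_succ (d + 1) m)
  rw [card_seg', card_seg', Nat.add_sub_cancel_left, card_eq_one] at h
  obtain ⟨x, hx⟩ := h
  refine ⟨x, ?_, fun h => ?_⟩
  · rw [insert_eq, ← hx, sdiff_union_of_subset (seg_subset_succ (d + 1) m)]
  · have := hx.symm ▸ mem_singleton_self x
    exact (mem_sdiff.mp this).2 h

lemma supp_lt {n : ℕ} {x : Fin (n + 1) → ℕ} (h : ∃ i, x i = 0) : supp x ≤ n := by
  obtain ⟨i, hi⟩ := h
  obtain ⟨a, y, rfl⟩ := exists_insertNth i x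
  simp only [Fin.insertNth_apply_same] at hi
  subst hi
  rw [supp_insertNth, if_neg (lt_irrefl 0), zero_add, supp]
  refine (sum_le_sum fun j _ => (?_ : _ ≤ 1)).trans (by simp)
  split_ifs <;> simp

lemma wt_seg_succ_le (d m : ℕ) : wt (seg (d + 1) (m + 1)) ≤ wt (seg (d + 1) m) + (d + 1) := by
  obtain ⟨x, hx, hx'⟩ := exists_seg_succ d m
  have := supp_lt (seg_hasZero (d + 1) (m + 1) x (hx ▸ mem_insert_self _ _))
  rw [hx, wt, sum_insert hx', wt]
  omega

lemma wt_seg_add_le (d m r : ℕ) :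
    wt (seg (d + 1) (m + r)) ≤ wt (seg (d + 1) m) + (d + 1) * r := by
  induction r with
  | zero => simp
  | succ r ih =>
    have := wt_seg_succ_le d (m + r)
    rw [mul_add, mul_one]
    change wt (seg (d + 1) (m + r + 1)) ≤ _
    omega

/-- Adding one point to a set bounded by `N` adds at most `N` points to its `fill`: they lie on a
line in the direction of a zero coordinate of the new point. -/
lemma card_fill_insert_le {d N : ℕ} {A : Finset (Fin (d + 2) → ℕ)} {x : Fin (d + 2) → ℕ}
    (hx : ∃ i, x i = 0) (hN : ∀ y ∈ insert x A, ∀ j, y j ≤ N) :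
    (fill (insert x A)).card ≤ (fill A).card + N := by
  obtain ⟨i, hi⟩ := hx
  have hsub : fill (insert x A) ⊆ fill A ∪
      (Icc 1 N).image fun a => Function.update x i a := by
    intro z hz
    have hzN : z i ≤ N := by
      obtain ⟨k, hk⟩ := exists_ne i
      have := hN _ ((mem_fill.mp hz).2 k) i
      rwa [Function.update_of_ne hk.symm] at this
    rw [mem_fill] at hz
    by_cases h : ∀ k, Function.update z k 0 ∈ A
    · exact mem_union_left _ (mem_fill.mpr ⟨hz.1, h⟩)
    · push Not at h
      obtain ⟨k, hk⟩ := h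
      have hkx := (mem_insert.mp (hz.2 k)).resolve_right hk
      have hik : i = k := by
        by_contra hne
        rw [← hkx, Function.update_of_ne hne] at hi
        have := hz.1 i
        omega
      subst hik
      refine mem_union_right _ (mem_image.mpr ⟨z i, mem_Icc.mpr ⟨hz.1 i, hzN⟩, ?_⟩)
      rw [← hkx]; simp
  refine (card_le_card hsub).trans ((card_union_le _ _).trans ?_)
  have := card_image_le (s := Icc 1 N) (f := fun a => Function.update x i a)
  simp only [Nat.card_Icc] at this
  omega

lemma fill_seg_succ_le {d m N l : ℕ} (hm : m + 1 ≤ B (d + 1) l) (hl : l ≤ (d + 2) * N) :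
    (fill (seg (d + 1) (m + 1))).card ≤ (fill (seg (d + 1) m)).card + N := by
  obtain ⟨x, hx, -⟩ := exists_seg_succ d m
  rw [hx]
  refine card_fill_insert_le (seg_hasZero (d + 1) (m + 1) x (hx ▸ mem_insert_self _ _)) ?_
  rw [← hx]
  intro y hy j
  exact ((mem_box.mp (seg_subset_box hm hy)).1 j).trans (cap_le hl j)

/-! ### Compression of the slices -/

/-- Moving `r` points from the top slice to the positive part, where `r` is minimal such that the
positive part is at least as large as the `fill` of the new top slice. Here `l` lists the sizes of
the slices, `k` is the size of the positive part, and `W`, `F` stand for the two functionals on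
initial segments. -/
lemma exists_shift {F W l : ℕ → ℕ} {D M k : ℕ} (hF0 : F 0 = 0) (hF : Monotone F)
    (hW : ∀ m r, W (m + r) ≤ W m + D * r) (hl : Antitone l) (hk : k ≤ F (l 0))
    (hinc : ∀ s, s + 1 ≤ l 0 → F (s + 1) ≤ F s + (M + 1)) :
    ∃ (l' : ℕ → ℕ) (k' : ℕ), Antitone l' ∧ l' 0 ≤ l 0 ∧ k' ≤ F (l' 0) ∧
      (l' (M + 1) = 0 ∨ F (l' (M + 1)) ≤ k') ∧
      l' 0 + ∑ a ∈ range (M + 1), l' (a + 1) + k' = l 0 + ∑ a ∈ range (M + 1), l (a + 1) + k ∧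
      W (l 0) + ∑ a ∈ range (M + 1), (W (l (a + 1)) + l (a + 1)) + (D + 1) * k ≤
        W (l' 0) + ∑ a ∈ range (M + 1), (W (l' (a + 1)) + l' (a + 1)) + (D + 1) * k' ∧
      ∑ a ∈ range (M + 1), min (F (l (a + 1))) k ≤
        ∑ a ∈ range (M + 1), min (F (l' (a + 1))) k' := by
  have hex : ∃ r, r ≤ l (M + 1) ∧ F (l (M + 1) - r) ≤ k + r :=
    ⟨l (M + 1), le_rfl, by rw [Nat.sub_self, hF0]; exact Nat.zero_le _⟩
  obtain ⟨hr1, hr2⟩ := Nat.find_spec hex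
  have hr3 := fun s => Nat.find_min hex (m := s)
  generalize Nat.find hex = r at hr1 hr2 hr3
  rcases Nat.eq_zero_or_pos r with rfl | hr
  · exact ⟨l, k, hl, le_rfl, hk, Or.inr hr2, rfl, le_rfl, le_rfl⟩
  have hmin : k + r ≤ F (l (M + 1) - r + 1) := by
    by_contra h
    refine hr3 (r - 1) (by omega) ⟨by omega, ?_⟩
    rw [show l (M + 1) - (r - 1) = l (M + 1) - r + 1 by omega]
    omega
  have hl0 : ∀ a ≤ M + 1, l (M + 1) ≤ l a := fun a ha => hl ha
  have hFl : ∀ a ≤ M + 1, k + r ≤ F (l a) := fun a ha =>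
    hmin.trans (hF (by have := hl0 a ha; omega))
  have e0 : ∀ a ≤ M, (if a ≤ M then l a else l (M + 1) - r) = l a := fun a ha => if_pos ha
  have e1 : (if M + 1 ≤ M then l (M + 1) else l (M + 1) - r) = l (M + 1) - r :=
    if_neg (by omega)
  have es : ∀ g : ℕ → ℕ, ∑ a ∈ range M, g (if a + 1 ≤ M then l (a + 1) else l (M + 1) - r) =
      ∑ a ∈ range M, g (l (a + 1)) := fun g =>
    sum_congr rfl fun a ha => by rw [if_pos (by have := mem_range.mp ha; omega)]
  refine ⟨fun a => if a ≤ M then l a else l (M + 1) - r, k + r, ?_, ?_, ?_, ?_, ?_, ?_, ?_⟩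
  · intro a b hab
    have h1 := hl hab
    simp only
    split_ifs with h2 h3 h3
    · exact h1
    · omega
    · have := hl0 a (by omega)
      omega
    · exact le_rfl
  · simp
  · simpa using hFl 0 (by omega)
  · simp only [e1]; exact Or.inr hr2
  · rw [sum_range_succ, sum_range_succ]
    simp only [e1, es (fun x => x), Nat.zero_le, if_true]
    omega
  · rw [sum_range_succ, sum_range_succ]
    simp only [e1, es (fun x => W x + x), Nat.zero_le, if_true]
    have h1 := hW (l (M + 1) - r) r
    rw [Nat.sub_add_cancel hr1] at h1
    have h2 : (D + 1) * (k + r) = (D + 1) * k + D * r + r := by ring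
    omega
  · rw [sum_range_succ, sum_range_succ]
    simp only [e1, es (fun x => min (F x) (k + r))]
    have h1 : ∑ a ∈ range M, min (F (l (a + 1))) k + M * r ≤
        ∑ a ∈ range M, min (F (l (a + 1))) (k + r) := by
      have : ∑ a ∈ range M, (min (F (l (a + 1))) k + r) ≤
          ∑ a ∈ range M, min (F (l (a + 1))) (k + r) := sum_le_sum fun a ha => by
        have := hFl (a + 1) (by have := mem_range.mp ha; omega)
        rw [min_eq_right this, min_eq_right (by omega)]
      simpa [sum_add_distrib] using this
    have h2 := hinc (l (M + 1) - r) (by have := hl0 0 (by omega); omega)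
    rw [min_eq_left hr2]
    have h3 : min (F (l (M + 1))) k ≤ k := min_le_right _ _
    have h4 : M ≤ M * r := Nat.le_mul_of_pos_right M hr
    omega

lemma good_build {d : ℕ} {i : Fin (d + 3)} {M : ℕ} {l : ℕ → ℕ} {K : Finset (Fin (d + 2) → ℕ)}
    (hl : Antitone l) (hK : PosLower K) (hKl : K ⊆ fill (seg (d + 1) (l 0))) :
    Good (build i M (fun a => seg (d + 1) (l a)) K) where
  lower x x' hle hx := by
    obtain ⟨a, y, rfl⟩ := exists_insertNth i x
    obtain ⟨b, y', rfl⟩ := exists_insertNth i x'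
    have hba : b ≤ a := by simpa using hle i
    have hy : y' ≤ y := fun j => by simpa using hle (i.succAbove j)
    rw [mem_coe, mem_build] at *
    rcases hx with ⟨h1, h2⟩ | ⟨rfl, h2⟩
    · exact Or.inl ⟨hba.trans h1, seg_mono _ (hl hba) (seg_isLowerSet _ _ hy h2)⟩
    · have hb : b = 0 := by omega
      subst hb
      by_cases hp : ∀ j, 0 < y' j
      · exact Or.inr ⟨rfl, hK.lower y h2 y' hy hp⟩
      · push Not at hp
        obtain ⟨k, hk⟩ := hp
        refine Or.inl ⟨Nat.zero_le _, seg_isLowerSet _ _ (fun j => ?_) ((mem_fill.mp (hKl h2)).2 k)⟩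
        by_cases hj : j = k
        · subst hj; simp; omega
        · simpa [hj] using hy j
  hasZero x hx := by
    obtain ⟨a, y, rfl⟩ := exists_insertNth i x
    rw [exists_insertNth_zero]
    rcases mem_build.mp hx with ⟨-, h⟩ | ⟨h, -⟩
    · exact Or.inr (seg_hasZero _ _ y h)
    · exact Or.inl h

/-- The slices of `A` can be replaced by initial segments, and the positive part by a set nested
with their `fill`s, without decreasing either functional. -/
lemma exists_compress {d : ℕ} (ih : ∀ L : Finset (Fin (d + 2) → ℕ), Good L → Bounded L)
    {A : Finset (Fin (d + 3) → ℕ)} (hA : Good A) {i : Fin (d + 3)} {M σ : ℕ}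
    (hM : ∀ x ∈ A, x i ≤ M + 1) (h0 : (sl i 0 A).card ≤ B (d + 1) σ)
    (hσ : σ ≤ (d + 2) * (M + 1)) :
    ∃ (l : ℕ → ℕ) (K : Finset (Fin (d + 2) → ℕ)), Antitone l ∧ l 0 ≤ B (d + 1) σ ∧ PosLower K ∧
      K ⊆ fill (seg (d + 1) (l 0)) ∧
      (∀ t, (fill (seg (d + 1) t)).card ≤ K.card → fill (seg (d + 1) t) ⊆ K) ∧
      (l (M + 1) = 0 ∨ (fill (seg (d + 1) (l (M + 1)))).card ≤ K.card) ∧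
      (build i (M + 1) (fun a => seg (d + 1) (l a)) K).card = A.card ∧
      wt A ≤ wt (build i (M + 1) (fun a => seg (d + 1) (l a)) K) ∧
      (fill A).card ≤ (fill (build i (M + 1) (fun a => seg (d + 1) (l a)) K)).card := by
  have hk : (ker i A).card ≤ (fill (seg (d + 1) (sl i 0 A).card)).card :=
    (card_le_card (ker_subset_fill hA.lower i)).trans (ih _ (hA.sl i 0)).2
  obtain ⟨l, k, hl, hl0, hkl, htop, hcard, hwt, hfill⟩ := exists_shift
    (F := fun m => (fill (seg (d + 1) m)).card) (W := fun m => wt (seg (d + 1) m))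
    (l := fun a => (sl i a A).card) (D := d + 1) (M := M) (k := (ker i A).card)
    (fill_seg_zero d) (fill_seg_mono d) (wt_seg_add_le d)
    (fun a b h => card_le_card (sl_anti hA.lower i h)) hk
    (fun s hs => fill_seg_succ_le (hs.trans h0) hσ)
  obtain ⟨K, hK, rfl, hnest⟩ := exists_nested d hkl
  -- among nested sets, inclusion is determined by the sizes
  have hn1 : ∀ t, (fill (seg (d + 1) t)).card ≤ K.card → fill (seg (d + 1) t) ⊆ K := fun t ht => by
    rcases hnest t with h | h
    · exact h
    · rw [eq_of_subset_of_card_le h ht]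
  have hn2 : ∀ t, K.card ≤ (fill (seg (d + 1) t)).card → K ⊆ fill (seg (d + 1) t) := fun t ht => by
    rcases hnest t with h | h
    · rw [eq_of_subset_of_card_le h ht]
    · exact h
  have hmin : ∀ t, (fill (seg (d + 1) t) ∩ K).card = min (fill (seg (d + 1) t)).card K.card := by
    intro t
    rcases le_total (fill (seg (d + 1) t)).card K.card with h | h
    · rw [min_eq_left h, inter_eq_left.mpr (hn1 t h)]
    · rw [min_eq_right h, inter_eq_right.mpr (hn2 t h)]
  have hA' := build_sl hA.hasZero hM
  have hsz : ∀ a, ∀ y ∈ sl i a A, ∃ j, y j = 0 := fun a => sl_hasZero i a A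
  have hkp : ∀ y ∈ ker i A, ∀ j, 0 < y j := fun y hy => (mem_ker.mp hy).2
  have hsegz : ∀ a, ∀ y ∈ (fun a => seg (d + 1) (l a)) a, ∃ j, y j = 0 :=
    fun a => seg_hasZero (d + 1) (l a)
  have c1 := card_build (i := i) (M := M + 1) hsz hkp
  have w1 := wt_build (i := i) (M := M + 1) hsz hkp
  have f1 := card_fill_build (i := i) (M := M + 1) (K := ker i A) hsz
  rw [hA'] at c1 w1 f1
  refine ⟨l, K, hl, hl0.trans h0, hK, hn2 _ hkl, hn1, htop, ?_, ?_, ?_⟩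
  · rw [card_build hsegz hK.pos, c1]
    simpa only [card_seg'] using hcard
  · rw [wt_build hsegz hK.pos, w1]
    simp only [card_seg']
    refine le_trans ?_ hwt
    have h1 := (ih _ (hA.sl i 0)).1
    have h2 : ∑ a ∈ range (M + 1), (wt (sl i (a + 1) A) + (sl i (a + 1) A).card) ≤
        ∑ a ∈ range (M + 1), (wt (seg (d + 1) (sl i (a + 1) A).card) + (sl i (a + 1) A).card) :=
      sum_le_sum fun a _ => Nat.add_le_add_right (ih _ (hA.sl i (a + 1))).1 _
    exact Nat.add_le_add_right (Nat.add_le_add h1 h2) _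
  · rw [card_fill_build hsegz, f1]
    simp only [hmin]
    refine le_trans (sum_le_sum fun a _ => ?_) hfill
    exact le_min ((card_le_card inter_subset_left).trans (ih _ (hA.sl i (a + 1))).2)
      (card_le_card inter_subset_right)

/-! ### The induction step -/

lemma sl_build {d : ℕ} {i : Fin (d + 3)} {M a : ℕ} {l : ℕ → ℕ} {K : Finset (Fin (d + 2) → ℕ)}
    (hK : PosLower K) (ha : a ≤ M) :
    sl i a (build i M (fun a => seg (d + 1) (l a)) K) = seg (d + 1) (l a) := by
  ext y
  rw [mem_sl, mem_build]
  constructor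
  · rintro ⟨⟨-, h⟩ | ⟨-, h⟩, j, hj⟩
    · exact h
    · have := hK.pos y h j; omega
  · exact fun h => ⟨Or.inl ⟨ha, h⟩, seg_hasZero _ _ y h⟩

lemma card_box_insertNth {n : ℕ} (i : Fin (n + 1)) (a : ℕ) (c : Fin n → ℕ) :
    (box (i.insertNth (α := fun _ => ℕ) a c)).card + a * ∏ j, c j =
      (a + 1) * ∏ j, (c j + 1) := by
  have h := card_box_add (i.insertNth (α := fun _ => ℕ) a c)
  rw [Fin.prod_univ_succAbove _ i, Fin.prod_univ_succAbove _ i] at h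
  simpa using h

/-- If the top slice is nonempty and its `fill` is no larger than the positive part, then one of
the top layers of the compressed set can be peeled off. -/
lemma bounded_build {d : ℕ} {i : Fin (d + 3)} {M σ₀ : ℕ} {l : ℕ → ℕ}
    {K : Finset (Fin (d + 2) → ℕ)}
    (ih : ∀ L : Finset (Fin (d + 2) → ℕ), Good L → Bounded L)
    (hl : Antitone l) (hl0 : l 0 ≤ B (d + 1) σ₀) (hσ₀ : σ₀ ≤ (d + 2) * (M + 1))
    (hK : PosLower K) (hKl : K ⊆ fill (seg (d + 1) (l 0)))
    (hn : ∀ t, (fill (seg (d + 1) t)).card ≤ K.card → fill (seg (d + 1) t) ⊆ K)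
    (hpos : 0 < l (M + 1)) (htop : (fill (seg (d + 1) (l (M + 1)))).card ≤ K.card)
    (ihm : ∀ A' : Finset (Fin (d + 3) → ℕ),
      A'.card < (build i (M + 1) (fun a => seg (d + 1) (l a)) K).card → Good A' → Bounded A') :
    Bounded (build i (M + 1) (fun a => seg (d + 1) (l a)) K) := by
  have hA := good_build (i := i) (M := M + 1) hl hK hKl
  have hcard := card_build (i := i) (M := M + 1) (L := fun a => seg (d + 1) (l a))
    (fun a => seg_hasZero (d + 1) (l a)) hK.pos
  have hslice := sl_build (i := i) (M := M + 1) (l := l) hK le_rfl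
  have hmem : ∀ a y, i.insertNth (α := fun _ => ℕ) a y ∈
      build i (M + 1) (fun a => seg (d + 1) (l a)) K ↔
      (a ≤ M + 1 ∧ y ∈ seg (d + 1) (l a)) ∨ (a = 0 ∧ y ∈ K) := fun a y => mem_build
  generalize build i (M + 1) (fun a => seg (d + 1) (l a)) K = A at *
  simp only [card_seg'] at hcard
  have hAi : ∀ x ∈ A, x i ≤ M + 1 := fun x hx => by
    obtain ⟨a, y, rfl⟩ := exists_insertNth i x
    rw [Fin.insertNth_apply_same]
    rcases (hmem a y).mp hx with ⟨h, -⟩ | ⟨rfl, -⟩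
    · exact h
    · omega
  have hAj : ∀ x ∈ A, ∀ j, x j ≤ M + 1 := fun x hx => by
    obtain ⟨a, y, rfl⟩ := exists_insertNth i x
    refine forall_insertNth (p := fun b => b ≤ M + 1).mpr ⟨by simpa using hAi _ hx, fun j => ?_⟩
    rcases (hmem a y).mp hx with ⟨-, h⟩ | ⟨-, h⟩
    · have h1 : y ∈ seg (d + 1) (B (d + 1) σ₀) :=
        seg_mono _ ((hl (Nat.zero_le a)).trans hl0) h
      rw [seg_box] at h1
      exact ((mem_box.mp h1).1 j).trans (cap_le hσ₀ j)
    · have h1 := fill_mono (seg_mono (d + 1) hl0) (hKl h)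
      rw [seg_box, fill_box, Fintype.mem_piFinset] at h1
      exact (mem_Icc.mp (h1 j)).2.trans (cap_le hσ₀ j)
  -- peeling in direction `j`
  have peel : ∀ j lam, 0 < (sl j (M + 1) A).card →
      (sl j (M + 1) A).card ≤ B (d + 1) (red (d + 1) lam) →
      B (d + 2) lam + (sl j (M + 1) A).card ≤ A.card → Bounded A := by
    intro j lam h0 h1 h2
    refine bounded_of_peel hA (fun x hx => hAj x hx j) (ihm _ ?_ (hA.filter_lt _ _))
      (ih _ (hA.sl j (M + 1))) h1 h2
    obtain ⟨y, hy⟩ := card_pos.mp h0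
    refine card_lt_card (filter_ssubset.mpr ⟨_, (mem_sl.mp hy).1, ?_⟩)
    simp
  have hslc : (sl i (M + 1) A).card = l (M + 1) := by rw [hslice, card_seg']
  -- all slices are at least as large as the top one
  have hm : (M + 2) * l (M + 1) + (fill (seg (d + 1) (l (M + 1)))).card ≤ A.card := by
    have h1 : ∑ a ∈ range (M + 1), l (M + 1) ≤ ∑ a ∈ range (M + 1), l (a + 1) :=
      sum_le_sum fun a ha => hl (by have := mem_range.mp ha; omega)
    have h2 : l (M + 1) ≤ l 0 := hl (Nat.zero_le _)
    simp only [sum_const, card_range, smul_eq_mul] at h1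
    have h3 : (M + 2) * l (M + 1) = (M + 1) * l (M + 1) + l (M + 1) := by ring
    omega
  have htl0 : l (M + 1) ≤ B (d + 1) σ₀ := (hl (Nat.zero_le _)).trans hl0
  have hex : ∃ lam, l (M + 1) ≤ B (d + 1) (red (d + 1) lam) := by
    refine ⟨2 * l (M + 1), ((B_strictMono d).le_apply).trans (B_mono' _ ?_)⟩
    have : 2 * l (M + 1) / (d + 1 + 2) ≤ 2 * l (M + 1) / 2 :=
      Nat.div_le_div_left (by omega) (by omega)
    simp only [red]
    omega
  have hfind := Nat.find_spec hex
  have hmin := fun s => Nat.find_min hex (m := s)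
  generalize Nat.find hex = lam at hfind hmin
  cases lam with
  | zero =>
    refine peel i 0 (by omega) (by omega) ?_
    have h0 : l (M + 1) ≤ 1 := by simpa [red, B_zero] using hfind
    rw [hslc, B_zero]
    have h1 : l (M + 1) = 1 := by omega
    rw [h1] at hm ⊢
    omega
  | succ lam =>
    have hlt := hmin lam (Nat.lt_succ_self lam)
    set σ := red (d + 1) lam with hσ
    obtain ⟨q, p, e1, hp, e2, e3⟩ := exists_div_mod (d + 2) lam
    have hσ1 : σ = q * (d + 2) + p := by
      have e2' : lam / (d + 1 + 2) = q := e2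
      rw [hσ, red, e2', e1]
      have : q * (d + 2 + 1) = q * (d + 2) + q := by ring
      omega
    have hσσ : σ < σ₀ := by
      by_contra h
      have := B_mono' (d + 1) (not_lt.mp h)
      omega
    have hqM : q ≤ M := by
      by_contra h
      have h1 : (d + 2) * (M + 1) ≤ (d + 2) * q := Nat.mul_le_mul_left _ (by omega)
      rw [mul_comm _ q] at h1
      omega
    have hBσ : (fill (seg (d + 1) (B (d + 1) σ))).card = ∏ j, cap (d + 1) σ j := by
      rw [seg_box, card_fill_box]
    have hUW := card_box_add (cap (d + 1) σ)
    change B (d + 1) σ + _ = _ at hUW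
    have hFt := fill_seg_mono d (not_le.mp hlt).le
    simp only [hBσ] at hFt
    -- the box of index `lam + 1` has the side vector `cap (d + 1) σ` with the entry `q + 1` added
    have hBl : B (d + 2) (lam + 1) + (q + 1) * ∏ j, cap (d + 1) σ j =
        (q + 2) * ∏ j, (cap (d + 1) σ j + 1) := by
      rw [← card_box_insertNth (pos (d + 2) lam) (q + 1), B]
      congr 3
      ext j
      obtain rfl | ⟨j, rfl⟩ := Fin.eq_self_or_eq_succAbove (pos (d + 2) lam) j
      · rw [Fin.insertNth_apply_same, cap_succ_pos, e2]
      · rw [Fin.insertNth_apply_succAbove, cap_succ_succAbove]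
    set U := ∏ j, (cap (d + 1) σ j + 1)
    set V := ∏ j, cap (d + 1) σ j
    set t := l (M + 1)
    have hBt : B (d + 1) σ + 1 ≤ t := not_le.mp hlt
    have hpeel_i : B (d + 2) (lam + 1) + t ≤ A.card → Bounded A := fun h =>
      peel i (lam + 1) (by omega) (by omega) (by omega)
    have key : (q + 2) * t + V ≥ B (d + 2) (lam + 1) + (q + 2) := by
      have : (q + 2) * (B (d + 1) σ + 1) ≤ (q + 2) * t := Nat.mul_le_mul_left _ hBt
      rw [← hUW] at hBl
      nlinarith
    rcases hqM.lt_or_eq with hlt' | heq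
    · refine hpeel_i ?_
      have h1 : (q + 3) * t ≤ (M + 2) * t := Nat.mul_le_mul_right _ (by omega)
      have h2 : (q + 3) * t = (q + 2) * t + t := by ring
      omega
    · subst heq
      by_cases hcase : B (d + 2) (lam + 1) + t ≤ A.card
      · exact hpeel_i hcase
      -- `A` properly contains a box of the size of the `(lam + 1)`-st balanced box
      have hD : box (i.insertNth (α := fun _ => ℕ) (q + 1) (cap (d + 1) σ)) ⊆ A := by
        intro x hx
        obtain ⟨a, y, rfl⟩ := exists_insertNth i x
        rw [mem_box, exists_insertNth_zero] at hx
        have hxa : a ≤ q + 1 := by simpa using hx.1 i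
        have hxy : ∀ j, y j ≤ cap (d + 1) σ j := fun j => by simpa using hx.1 (i.succAbove j)
        rw [hmem]
        by_cases hy : ∃ j, y j = 0
        · left
          refine ⟨hxa, seg_mono (d + 1) ((not_le.mp hlt).le.trans (hl hxa)) ?_⟩
          rw [seg_box]
          exact mem_box.mpr ⟨hxy, hy⟩
        · right
          refine ⟨hx.2.resolve_right hy, hn _ htop
            (fill_mono (seg_mono (d + 1) (not_le.mp hlt).le) ?_)⟩
          rw [seg_box, fill_box, Fintype.mem_piFinset]
          exact fun j => mem_Icc.mpr ⟨Nat.pos_of_ne_zero fun h => hy ⟨j, h⟩, hxy j⟩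
      have hDc : (box (i.insertNth (α := fun _ => ℕ) (q + 1) (cap (d + 1) σ))).card =
          B (d + 2) (lam + 1) := by
        have := card_box_insertNth i (q + 1) (cap (d + 1) σ)
        change _ + (q + 1) * V = (q + 2) * U at this
        omega
      obtain ⟨x, hx, hxD⟩ := exists_mem_notMem_of_card_lt_card
        (show (box (i.insertNth (α := fun _ => ℕ) (q + 1) (cap (d + 1) σ))).card < A.card by omega)
      obtain ⟨j, hj⟩ : ∃ j, ¬ x j ≤ i.insertNth (α := fun _ => ℕ) (q + 1) (cap (d + 1) σ) j := by
        by_contra h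
        push Not at h
        exact hxD (mem_box.mpr ⟨h, hA.hasZero x hx⟩)
      have hxj := hAj x hx j
      have hDj : i.insertNth (α := fun _ => ℕ) (q + 1) (cap (d + 1) σ) j < q + 1 := by omega
      have hjq : q ≤ i.insertNth (α := fun _ => ℕ) (q + 1) (cap (d + 1) σ) j := by
        obtain rfl | ⟨j, rfl⟩ := Fin.eq_self_or_eq_succAbove i j
        · simp
        · rw [Fin.insertNth_apply_succAbove]
          exact le_cap (by rw [hσ1, mul_comm]; exact Nat.le_add_right _ _) j
      have hxjq : x j = q + 1 := by omega
      have e := eq_layer hA.hasZero (j := j) (M := q) (fun x hx => hAj x hx j)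
      have ec := congrArg card e
      rw [card_layer (fun x hx => (mem_filter.mp hx).2)] at ec
      have hsub : (box (i.insertNth (α := fun _ => ℕ) (q + 1) (cap (d + 1) σ))).card ≤
          (A.filter fun x => x j < q + 1).card := card_le_card fun z hz =>
        mem_filter.mpr ⟨hD hz, ((mem_box.mp hz).1 j).trans_lt hDj⟩
      refine peel j (lam + 1) (card_pos.mpr ?_) (by omega) (by omega)
      refine ⟨j.removeNth x, ?_⟩
      have hxe : j.insertNth (α := fun _ => ℕ) (q + 1) (j.removeNth x) = x := by
        rw [← hxjq, Fin.insertNth_self_removeNth]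
      rw [mem_sl, hxe]
      have hz := hA.hasZero x hx
      rw [← hxe, exists_insertNth_zero] at hz
      exact ⟨hx, hz.resolve_left (by omega)⟩

lemma bounded_mono {d : ℕ} {A A' : Finset (Fin (d + 2) → ℕ)} (hc : A'.card = A.card)
    (hw : wt A ≤ wt A') (hf : (fill A).card ≤ (fill A').card) (h : Bounded A') : Bounded A := by
  rw [Bounded, hc] at h
  exact ⟨hw.trans h.1, hf.trans h.2⟩

/-- The induction step in the dimension, by induction on the size of `A` and, for fixed size, on the
sum of the sides of a balanced box containing `A`. -/
lemma bounded_succ {d : ℕ} (ih : ∀ L : Finset (Fin (d + 2) → ℕ), Good L → Bounded L) (m : ℕ) :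
    ∀ A : Finset (Fin (d + 3) → ℕ), A.card = m → Good A → Bounded A := by
  induction m using Nat.strong_induction_on with
  | _ m ihm =>
    -- induction on the size of a balanced box containing `A`
    have main : ∀ ρ, ∀ A : Finset (Fin (d + 3) → ℕ), A.card = m → Good A →
        ∀ (c : Fin (d + 3) → ℕ) (q : ℕ), (∀ j, q ≤ c j ∧ c j ≤ q + 1) → A ⊆ box c →
          ∑ j, c j = ρ → Bounded A := by
      intro ρ
      induction ρ with
      | zero =>
        intro A hAm hA c q hc hAc hsum
        have hcz : ∀ j, c j = 0 := fun j => by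
          have := single_le_sum (f := c) (fun _ _ => Nat.zero_le _) (mem_univ j)
          omega
        have hA0 : ∀ x ∈ A, x = 0 := fun x hx => by
          ext j
          have := (mem_box.mp (hAc hx)).1 j
          have := hcz j
          change x j = 0
          omega
        have hw : wt A = 0 := sum_eq_zero fun x hx => by simp [hA0 x hx, supp]
        have hf : (fill A).card = 0 := by
          rw [card_eq_zero, eq_empty_iff_forall_notMem]
          intro z hz
          rw [mem_fill] at hz
          have h1 := congrFun (hA0 _ (hz.2 0)) 1
          have h2 := hz.1 1
          rw [Function.update_of_ne (by simp)] at h1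
          simp only [Pi.zero_apply] at h1
          omega
        exact ⟨by omega, by omega⟩
      | succ ρ ihρ =>
        intro A hAm hA c q hc hAc hsum
        -- a coordinate whose lowering keeps the box balanced
        obtain ⟨i, M, hi, hcM⟩ : ∃ i M, c i = M + 1 ∧ ∀ j, M ≤ c j ∧ c j ≤ M + 1 := by
          by_cases h : ∃ i, c i = q + 1
          · obtain ⟨i, hi⟩ := h
            exact ⟨i, q, hi, hc⟩
          · push Not at h
            have hcq : ∀ j, c j = q := fun j => by have := hc j; have := h j; omega
            have hq : q ≠ 0 := fun hq => by simp [hcq, hq] at hsum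
            exact ⟨0, q - 1, by rw [hcq]; omega, fun j => by rw [hcq]; omega⟩
        set e : Fin (d + 2) → ℕ := fun j => c (i.succAbove j) with he
        have heM : ∀ j, M ≤ e j ∧ e j ≤ M + 1 := fun j => hcM _
        have hse : ∑ j, e j + M = ρ := by
          rw [Fin.sum_univ_succAbove _ i, hi] at hsum
          change M + 1 + ∑ j, e j = ρ + 1 at hsum
          omega
        have hxi : ∀ x ∈ A, x i ≤ M + 1 := fun x hx => hi ▸ (mem_box.mp (hAc hx)).1 i
        have h0 : (sl i 0 A).card ≤ B (d + 1) (∑ j, e j) := by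
          rw [← card_box_balanced heM]
          refine card_le_card fun y hy => mem_box.mpr ⟨fun j => ?_, (mem_sl.mp hy).2⟩
          have := (mem_box.mp (hAc (mem_sl.mp hy).1)).1 (i.succAbove j)
          rwa [Fin.insertNth_apply_succAbove] at this
        have hσ : ∑ j, e j ≤ (d + 2) * (M + 1) := by
          have := sum_le_sum (s := univ) fun j _ => (heM j).2
          simpa using this
        have hσ' : (d + 2) * M ≤ ∑ j, e j := by
          have := sum_le_sum (s := univ) fun j _ => (heM j).1
          simpa using this
        obtain ⟨l, K, hl, hl0, hK, hKl, hn, htop, hcard, hwt, hfill⟩ :=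
          exists_compress ih hA hxi h0 hσ
        refine bounded_mono hcard hwt hfill ?_
        -- an empty top slice leaves a smaller balanced box; otherwise a layer can be peeled off
        by_cases hz : l (M + 1) = 0
        · have hcap : ∀ j, M ≤ cap (d + 1) (∑ j, e j) j ∧ cap (d + 1) (∑ j, e j) j ≤ M + 1 :=
            fun j => ⟨le_cap hσ' j, cap_le hσ j⟩
          have hgood := good_build (i := i) (M := M + 1) hl hK hKl
          refine ihρ _ (hcard.trans hAm) hgood
            (i.insertNth M (cap (d + 1) (∑ j, e j))) M ?_ ?_ ?_
          · exact forall_insertNth (p := fun b => M ≤ b ∧ b ≤ M + 1).mpr ⟨by omega, hcap⟩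
          · intro x hx
            have hxz := hgood.hasZero x hx
            obtain ⟨a, y, rfl⟩ := exists_insertNth i x
            refine mem_box.mpr ⟨insertNth_mono ?_ ?_, hxz⟩
            · rcases mem_build.mp hx with ⟨h1, h2⟩ | ⟨rfl, -⟩
              · by_contra h
                have : a = M + 1 := by omega
                subst this
                rw [hz, seg_zero] at h2
                exact absurd h2 (notMem_empty _)
              · omega
            · intro j
              rcases mem_build.mp hx with ⟨-, h⟩ | ⟨-, h⟩
              · have h1 : y ∈ seg (d + 1) (B (d + 1) (∑ j, e j)) :=
                  seg_mono _ ((hl (Nat.zero_le a)).trans hl0) h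
                rw [seg_box] at h1
                exact (mem_box.mp h1).1 j
              · have h1 := fill_mono (seg_mono (d + 1) hl0) (hKl h)
                rw [seg_box, fill_box, Fintype.mem_piFinset] at h1
                exact (mem_Icc.mp (h1 j)).2
          · rw [Fin.sum_univ_succAbove _ i]
            simp only [Fin.insertNth_apply_same, Fin.insertNth_apply_succAbove, sum_cap]
            omega
        · refine bounded_build ih hl hl0 hσ hK hKl hn (by omega) (htop.resolve_left hz) ?_
          intro A' hA' hg
          exact ihm _ (by omega) A' rfl hg
    intro A hAm hA
    -- any finite set lies in a cube
    refine main _ A hAm hA (fun _ => A.sup fun x => ∑ j, x j) _ (fun j => ⟨le_rfl, by omega⟩) ?_ rfl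
    intro x hx
    refine mem_box.mpr ⟨fun j => ?_, hA.hasZero x hx⟩
    exact (single_le_sum (f := x) (fun _ _ => Nat.zero_le _) (mem_univ j)).trans
      (le_sup (f := fun x : Fin (d + 3) → ℕ => ∑ j, x j) hx)

/-- Among the down-sets of given size, the initial segment maximises both functionals. -/
theorem bounded_of_good (d : ℕ) : ∀ A : Finset (Fin (d + 2) → ℕ), Good A → Bounded A := by
  induction d with
  | zero => exact fun A => bounded_two
  | succ d ih => exact fun A => bounded_succ ih _ A rfl

/-! ### The balanced order -/

/-- The balanced order: in terms of the set `T` of coordinates where `x` and `y` differ, some `j`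
in `T` is such that `y j` exceeds all values of `x` on `T`, ties being decided by the index. -/
def Below {n : ℕ} (x y : Fin n → ℕ) : Prop :=
  ∃ j, x j < y j ∧ ∀ i, x i ≠ y i → x i < y j ∨ (x i = y j ∧ i < j)

lemma below_total {n : ℕ} {x y : Fin n → ℕ} (h : x ≠ y) : Below x y ∨ Below y x := by
  have hne : (univ.filter fun i => x i ≠ y i).Nonempty := by
    obtain ⟨i, hi⟩ := Function.ne_iff.mp h
    exact ⟨i, by simpa using hi⟩
  -- the coordinate with the largest value of `x` and `y`, and the last such coordinate
  obtain ⟨j, hj, hmax⟩ := exists_max_image _ (fun i => toLex (max (x i) (y i), i)) hne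
  simp only [mem_filter, mem_univ, true_and, Prod.Lex.toLex_le_toLex] at hj hmax
  rcases lt_or_gt_of_ne hj with hlt | hlt
  · refine Or.inl ⟨j, hlt, fun i hi => ?_⟩
    have hij : i = j → x i < y j := fun e => e ▸ hlt
    rcases hmax i hi with h1 | ⟨h1, h2⟩
    · omega
    · rcases h2.lt_or_eq with h2 | h2
      · omega
      · exact Or.inl (hij h2)
  · refine Or.inr ⟨j, hlt, fun i hi => ?_⟩
    have hij : i = j → y i < x j := fun e => e ▸ hlt
    rcases hmax i (Ne.symm hi) with h1 | ⟨h1, h2⟩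
    · omega
    · rcases h2.lt_or_eq with h2 | h2
      · omega
      · exact Or.inl (hij h2)

lemma lt_of_cap_succ {d l : ℕ} {j k : Fin (d + 1)} (h : cap d l j = cap d l k + 1) : j < k := by
  rw [Fin.lt_def]
  simp only [cap] at h
  split_ifs at h <;> omega

lemma box_of_below {d l : ℕ} {x y : Fin (d + 1) → ℕ} (hx : x ∈ box (cap d l)) (hyx : Below y x)
    (hy : ∃ i, y i = 0) : y ∈ box (cap d l) := by
  refine mem_box.mpr ⟨fun k => ?_, hy⟩
  by_contra hk
  obtain ⟨j, -, hj⟩ := hyx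
  have hxb := (mem_box.mp hx).1
  have h1 := hxb k
  have h2 := hxb j
  have h3 := cap_le_cap d l j k
  rcases hj k (by omega) with h4 | ⟨h4, h5⟩
  · omega
  · exact absurd (lt_of_cap_succ (j := j) (k := k) (l := l) (by omega)) h5.asymm

lemma Below.of_insertNth {n : ℕ} {p : Fin (n + 1)} {a : ℕ} {x y : Fin n → ℕ}
    (h : Below (p.insertNth (α := fun _ => ℕ) a x) (p.insertNth (α := fun _ => ℕ) a y)) :
    Below x y := by
  obtain ⟨j, h1, h2⟩ := h
  obtain rfl | ⟨j, rfl⟩ := Fin.eq_self_or_eq_succAbove p j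
  · simp at h1
  · refine ⟨j, by simpa using h1, fun i hi => ?_⟩
    have := h2 (p.succAbove i) (by simpa using hi)
    simpa [Fin.succAbove_lt_succAbove_iff] using this

/-- The recursively defined `seg d m` is closed downwards in the balanced order. -/
lemma seg_of_below (d : ℕ) : ∀ m, ∀ x ∈ seg d m, ∀ y, (∃ i, y i = 0) → Below y x → y ∈ seg d m := by
  induction d with
  | zero =>
    rintro m x hx y ⟨i, hi⟩ -
    by_cases h : m = 0
    · simp [seg, h] at hx
    · simp only [seg, h, if_false, mem_singleton]
      ext j
      rw [show j = i from Fin.ext (by omega), hi]; rfl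
  | succ d ih =>
    intro m x hx y hy hyx
    rcases Nat.eq_zero_or_pos m with rfl | hm
    · simp [seg_zero] at hx
    obtain ⟨l, s, rfl, hs⟩ := exists_B_add d hm
    have hx' := seg_subset_box (l := l + 1) (by rw [B_succ]; omega) hx
    have hy' := box_of_below hx' hyx hy
    rw [seg_add d l s hs.le, mem_union] at hx ⊢
    rcases hx with hx | hx
    · exact Or.inl (box_of_below hx hyx hy)
    · rw [box_succ, mem_union] at hy'
      refine hy'.imp_right fun hy' => ?_
      obtain ⟨x, hxs, rfl⟩ := mem_image.mp hx
      obtain ⟨y, hyb, rfl⟩ := mem_image.mp hy'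
      exact mem_image_of_mem _ (ih s x hxs y (mem_box.mp hyb).2 hyx.of_insertNth)

lemma balancedLT_of {n : ℕ} {x y : Fin n → ℤ} {j : Fin n} (hj : x j < y j)
    (h : ∀ i, x i ≠ y i → x i < y j ∨ (x i = y j ∧ i < j)) : balancedLT x y := by
  have hjT : j ∈ diffSet x y := by simpa [diffSet] using hj.ne
  have h1 : maxOn (diffSet x y) x ≤ y j := by
    refine Finset.max_le fun a ha => ?_
    obtain ⟨i, hi, rfl⟩ := mem_image.mp ha
    rw [WithBot.coe_le_coe]
    rcases h i (by simpa [diffSet] using hi) with h | h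
    · exact h.le
    · exact h.1.le
  have h2 : (y j : WithBot ℤ) ≤ maxOn (diffSet x y) y := le_max (mem_image_of_mem _ hjT)
  refine ⟨fun e => hj.ne (congrFun e j), ?_⟩
  rcases (h1.trans h2).lt_or_eq with h3 | h3
  · exact Or.inl h3
  · have h4 : maxOn (diffSet x y) x = y j := le_antisymm h1 (h3 ▸ h2)
    have h5 : (j : WithBot (Fin n)) ≤ argmaxOn (diffSet x y) y :=
      le_max (mem_filter.mpr ⟨hjT, by rw [← h3, h4]⟩)
    refine Or.inr ⟨h3, lt_of_lt_of_le ?_ h5⟩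
    rw [argmaxOn, Finset.max_eq_sup_coe, Finset.sup_lt_iff (WithBot.bot_lt_coe j)]
    intro i hi
    obtain ⟨hi1, hi2⟩ := mem_filter.mp hi
    rw [h4, WithBot.coe_inj] at hi2
    rw [WithBot.coe_lt_coe]
    rcases h i (by simpa [diffSet] using hi1) with h | h
    · omega
    · exact h.2

/-! ### Passing from integers to natural numbers -/

/-- The points of `A` with coordinates read as natural numbers (negative ones truncated). -/
def toN {n : ℕ} (A : Finset (Fin n → ℤ)) : Finset (Fin n → ℕ) := A.image fun x j => (x j).toNat

section
variable {n : ℕ} {A : Finset (Fin n → ℤ)}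

lemma toNat_injOn (hA : ↑A ⊆ XSet (Fin n)) : Set.InjOn (fun (x : Fin n → ℤ) j => (x j).toNat) A := by
  intro x hx y hy h
  ext j
  have h1 := (hA hx).1 j
  have h2 := (hA hy).1 j
  have h3 := congrFun h j
  simp only at h3
  omega

lemma card_toN (hA : ↑A ⊆ XSet (Fin n)) : (toN A).card = A.card :=
  card_image_of_injOn (toNat_injOn hA)

lemma mem_toN (hA : ↑A ⊆ XSet (Fin n)) {y : Fin n → ℕ} :
    y ∈ toN A ↔ (fun j => (y j : ℤ)) ∈ A := by
  rw [toN, mem_image]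
  constructor
  · rintro ⟨x, hx, rfl⟩
    convert hx using 1
    ext j
    exact Int.toNat_of_nonneg ((hA hx).1 j)
  · exact fun h => ⟨_, h, by simp⟩

lemma good_toN (hA : ↑A ⊆ XSet (Fin n)) (hd : IsDownSet A) : Good (toN A) where
  lower x y hyx hx := by
    rw [mem_coe, mem_toN hA] at *
    exact hd _ _ (fun j => Int.natCast_nonneg _) (fun j => Int.ofNat_le.mpr (hyx j)) hx
  hasZero x hx := by
    obtain ⟨-, i, hi⟩ := hA ((mem_toN hA).mp hx)
    exact ⟨i, by simpa using hi⟩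

/-- Every projection of a down-set is attained at height zero. -/
lemma card_proj (hA : ↑A ⊆ XSet (Fin n)) (hd : IsDownSet A) (i : Fin n) :
    (proj i A).card = (A.filter fun x => x i = 0).card := by
  have h1 : proj i A = (A.filter fun x => x i = 0).image (projFun i) := by
    ext y
    simp only [proj, mem_image, mem_filter]
    constructor
    · rintro ⟨x, hx, rfl⟩
      have hx0 := (hA hx).1
      refine ⟨Function.update x i 0, ⟨hd _ x (fun j => ?_) (fun j => ?_) hx, by simp⟩, ?_⟩
      · by_cases hj : j = i
        · subst hj; simp
        · simpa [hj] using hx0 j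
      · by_cases hj : j = i
        · subst hj; simpa using hx0 j
        · simp [hj]
      · ext j
        simp [projFun, j.2]
    · rintro ⟨x, ⟨hx, -⟩, rfl⟩
      exact ⟨x, hx, rfl⟩
  rw [h1, card_image_of_injOn]
  intro x hx y hy h
  have hx' := (mem_filter.mp hx).2
  have hy' := (mem_filter.mp hy).2
  ext j
  by_cases hj : j = i
  · subst hj; rw [hx', hy']
  · exact congrFun h ⟨j, hj⟩

/-- For down-sets of given size, minimising the gap means maximising the number of positive
coordinates. -/
lemma gap_add_wt (hA : ↑A ⊆ XSet (Fin n)) (hd : IsDownSet A) :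
    gap A + wt (toN A) = (n - 1) * A.card := by
  have h : ∑ i, (proj i A).card + wt (toN A) = n * A.card := by
    rw [wt, toN, sum_image (toNat_injOn hA)]
    simp only [supp]
    rw [sum_comm (s := A), ← sum_add_distrib]
    have : ∀ i : Fin n, (proj i A).card + ∑ x ∈ A, (if 0 < (x i).toNat then 1 else 0) =
        A.card := fun i => by
      rw [card_proj hA hd, card_filter, ← sum_add_distrib, card_eq_sum_ones]
      refine sum_congr rfl fun x hx => ?_
      have := (hA hx).1 i
      split_ifs <;> omega
    rw [sum_congr rfl fun i _ => this i]
    simp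
  rw [gap, sub_mul, one_mul]
  zify at h
  linarith

end

/-- The initial segments of the balanced order on `X_n` are the sets `seg`: both are closed downwards
in a total order, so equality of sizes suffices. -/
lemma toN_initSeg {d : ℕ} {I : Finset (Fin (d + 2) → ℤ)} (hI : IsInitSeg I) :
    toN I = seg (d + 1) I.card := by
  have hc : (toN I).card = (seg (d + 1) I.card).card := by rw [card_toN hI.1, card_seg']
  refine eq_of_subset_of_card_le ?_ hc.ge
  by_contra hsub
  obtain ⟨x, hx, hx'⟩ := not_subset.mp hsub
  have hsub2 : ¬ seg (d + 1) I.card ⊆ toN I := fun h =>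
    hx' ((eq_of_subset_of_card_le h hc.le).symm ▸ hx)
  obtain ⟨y, hy, hy'⟩ := not_subset.mp hsub2
  rw [mem_toN hI.1] at hx hy'
  rcases below_total (x := x) (y := y) (fun e => hx' (e ▸ hy)) with h | ⟨j, h1, h2⟩
  · obtain ⟨-, i, hi⟩ := hI.1 hx
    exact hx' (seg_of_below _ _ y hy x ⟨i, by simpa using hi⟩ h)
  · obtain ⟨i, hi⟩ := seg_hasZero _ _ y hy
    refine hy' (hI.2 _ hx _ ⟨fun j => Int.natCast_nonneg _, i, by simpa using hi⟩
      (balancedLT_of (j := j) (by exact_mod_cast h1) fun i hi => ?_))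
    exact_mod_cast h2 i (by exact_mod_cast hi)

lemma isDownSet_initSeg {d : ℕ} {I : Finset (Fin (d + 2) → ℤ)} (hI : IsInitSeg I) :
    IsDownSet I := by
  intro x y hx hxy hy
  have hmem : ∀ z : Fin (d + 2) → ℤ, (∀ i, 0 ≤ z i) →
      ((fun j => (z j).toNat) ∈ toN I ↔ z ∈ I) := fun z hz => by
    rw [mem_toN hI.1]
    simp only [Int.toNat_of_nonneg (hz _)]
  rw [← hmem x hx]
  rw [← hmem y (hI.1 hy).1] at hy
  rw [toN_initSeg hI] at hy ⊢
  exact seg_isLowerSet _ _ (fun j => Int.toNat_le_toNat (hxy j)) hy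

end

end Balanced

/-- For every `n ≥ 2`, initial segments of the balanced order minimise the
gap among down-sets in `X_n` of given size. -/
theorem initSeg_minimises_gap (n : ℕ) (hn : 2 ≤ n)
    (A : Finset (Fin n → ℤ)) (hAX : ↑A ⊆ XSet (Fin n)) (hAdown : IsDownSet A)
    (I : Finset (Fin n → ℤ)) (hI : IsInitSeg I) (hcard : I.card = A.card) :
    gap I ≤ gap A := by
  obtain ⟨d, rfl⟩ := Nat.exists_eq_add_of_le' hn
  have h1 := Balanced.gap_add_wt hAX hAdown
  have h2 := Balanced.gap_add_wt hI.1 (Balanced.isDownSet_initSeg hI)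
  have h3 := (Balanced.bounded_of_good d _ (Balanced.good_toN hAX hAdown)).1
  rw [Balanced.card_toN hAX, ← hcard, ← Balanced.toN_initSeg hI] at h3
  rw [hcard] at h2
  zify at h3
  linarith

end ProjWA
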